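/- arXiv:1910.04193 — 5 statements merged into one kernel-verified Lean document; each statement's English description precedes it below -/
import Mathlib

section
/- (Lefschetz–Kalman–Yakubovich) Let A ∈ M_m(ℝ), B ∈ ℝ^{m×n}, C ∈ ℝ^{n×m}, D ∈ M_n(ℝ), and assume the pair (A,B) is controllable and the pair (A,C) is observable. Then the transfer matrix G(s) = C(sI − A)⁻¹B + D is strictly positive real if and only if there exist a symmetric positive definite matrix P ∈ M_m(ℝ), matrices L₀ ∈ ℝ^{p×m} and W₀ ∈ ℝ^{p×n} for some p, and a scalar ε > 0 such that PA + AᵀP = −L₀ᵀL₀ − εP, C − BᵀP = W₀ᵀL₀, and D + Dᵀ = W₀ᵀW₀. -/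
/-!
Let `F(P)` be the block matrix `[[PA + AᵀP, PB], [BᵀP, 0]]` (`kypMap`), so that the three
equations for `P, L, W` (with `ε = 0`) say that `[[0, Cᵀ], [C, D + Dᵀ]] - F(P)` is the Gram matrix
`[L W]ᵀ[L W]`. The scalar `ε` only replaces `A` by `A + (ε/2)I`, which is also the shift
`s ↦ s - ε/2` of the transfer matrix, so strict positive realness reduces to the positive real lemma
for a shifted system whose `A` has all its eigenvalues in the open left half plane.

From the equations to positive realness (`isPR_of_kyp`): with `R = (sI - A)⁻¹B`,
`G(s) + G(s)ᴴ = (LR + W)ᴴ(LR + W) + 2 Re(s) RᴴPR ⪰ 0`, and a kernel vector of `sI - A` would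
contradict the Lyapunov equation since `P ≻ 0`.

Conversely, `P` is obtained by duality. The convex cone of all `M` with `M - F(P) ⪰ 0` for some
symmetric `P` is closed (`isClosed_kypCone`), because controllability makes `F(P) ⪰ 0` force
`P = 0`. If `[[0, Cᵀ], [C, D + Dᵀ]]` were outside this cone, Hahn–Banach would give `Z = NNᵀ ⪰ 0`
annihilating the range of `F` and pairing negatively with it (`exists_kyp_certificate`). Writing
`N = [X; U]` and `Y = AX + BU`, annihilation means `YXᵀ + XYᵀ = 0`, hence
`(X + Y)(X + Y)ᵀ = (X - Y)(X - Y)ᵀ` and `X + Y = (X - Y)V` with `V` unitary. In an eigenbasis of `V`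
every column `(x, u)` of `N` satisfies `Ax + Bu = sx` with `Re s = 0`, or else `x = 0`; so the
pairing is a sum of values of `uᴴ(G(s) + G(s)ᴴ)u` on the imaginary axis and of `uᴴ(D + Dᵀ)u`
(`kyp_dual`), all nonnegative: a contradiction.

Finally `P ⪰ 0` follows from the Lyapunov inequality and stability (`posSemidef_of_lyapunov`), and
`P ≻ 0` because `ker P` is an `A`-invariant subspace of `ker C` (`posDef_of_observable`).
-/

open Matrix
open scoped ComplexOrder

/-- Kalman controllability matrix `[B, AB, …, A^{m−1}B]`. -/
noncomputable def kalmanMatrix {m n : ℕ} (A : Matrix (Fin m) (Fin m) ℝ)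
    (B : Matrix (Fin m) (Fin n) ℝ) : Matrix (Fin m) (Fin m × Fin n) ℝ :=
  Matrix.of fun i p => (A ^ (p.1 : ℕ) * B) i p.2

/-- `(A, B)` is controllable if the Kalman matrix has full rank `m`. -/
noncomputable def Controllable {m n : ℕ} (A : Matrix (Fin m) (Fin m) ℝ)
    (B : Matrix (Fin m) (Fin n) ℝ) : Prop := (kalmanMatrix A B).rank = m

/-- `(A, C)` is observable if `(Aᵀ, Cᵀ)` is controllable. -/
noncomputable def Observable {m n : ℕ} (A : Matrix (Fin m) (Fin m) ℝ)
    (C : Matrix (Fin n) (Fin m) ℝ) : Prop := Controllable Aᵀ Cᵀ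

/-- Transfer matrix `G(s) = C (sI − A)⁻¹ B + D` (entrywise complexification). -/
noncomputable def transferFn {m n : ℕ} (A : Matrix (Fin m) (Fin m) ℝ)
    (B : Matrix (Fin m) (Fin n) ℝ) (C : Matrix (Fin n) (Fin m) ℝ)
    (D : Matrix (Fin n) (Fin n) ℝ) (s : ℂ) : Matrix (Fin n) (Fin n) ℂ :=
  C.map Complex.ofReal * (s • (1 : Matrix (Fin m) (Fin m) ℂ) - A.map Complex.ofReal)⁻¹ *
    B.map Complex.ofReal + D.map Complex.ofReal

/-- The transfer matrix of `(A,B,C,D)` is positive real: no poles in the open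
right half plane (there `sI − A` is invertible) and `G(s) + G(s̄)ᵀ ⪰ 0` for all
`s` with `Re s > 0`. -/
noncomputable def IsPR {m n : ℕ} (A : Matrix (Fin m) (Fin m) ℝ)
    (B : Matrix (Fin m) (Fin n) ℝ) (C : Matrix (Fin n) (Fin m) ℝ)
    (D : Matrix (Fin n) (Fin n) ℝ) : Prop :=
  ∀ s : ℂ, 0 < s.re →
    IsUnit (s • (1 : Matrix (Fin m) (Fin m) ℂ) - A.map Complex.ofReal).det ∧
    (transferFn A B C D s + (transferFn A B C D ((starRingEnd ℂ) s))ᵀ).PosSemidef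

/-- Strictly positive real: there is `ε > 0` such that `s ↦ G(s − ε)` is PR;
since `G(s − ε) = C (sI − (A + εI))⁻¹ B + D`, this is `IsPR (A + ε•I) B C D`. -/
noncomputable def IsSPR {m n : ℕ} (A : Matrix (Fin m) (Fin m) ℝ)
    (B : Matrix (Fin m) (Fin n) ℝ) (C : Matrix (Fin n) (Fin m) ℝ)
    (D : Matrix (Fin n) (Fin n) ℝ) : Prop :=
  ∃ ε : ℝ, 0 < ε ∧ IsPR (A + ε • (1 : Matrix (Fin m) (Fin m) ℝ)) B C D

/-! ### Reachability -/

/-- Reachability of `(A, B)`, stated through left annihilators of all the blocks `AᵏB`, `k ∈ ℕ`: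
only `P = 0` kills every one of them. Equivalent to controllability, but visibly invariant under
shifts of `A`. -/
def IsReachable {m n : ℕ} (A : Matrix (Fin m) (Fin m) ℝ) (B : Matrix (Fin m) (Fin n) ℝ) : Prop :=
  ∀ P : Matrix (Fin m) (Fin m) ℝ, (∀ k : ℕ, P * (A ^ k * B) = 0) → P = 0

theorem Controllable.isReachable {m n : ℕ} {A : Matrix (Fin m) (Fin m) ℝ}
    {B : Matrix (Fin m) (Fin n) ℝ} (h : Controllable A B) : IsReachable A B := by
  intro P hP
  have hr : LinearMap.range (kalmanMatrix A B).mulVecLin = ⊤ := by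
    apply Submodule.eq_top_of_finrank_eq
    have : (kalmanMatrix A B).rank = m := h
    rw [Matrix.rank] at this
    simpa using this
  have hPK : P * kalmanMatrix A B = 0 := by
    ext i ⟨k, j⟩
    exact congrFun (congrFun (hP k) i) j
  ext i j
  obtain ⟨v, hv⟩ : Pi.single j 1 ∈ LinearMap.range (kalmanMatrix A B).mulVecLin := by
    rw [hr]; trivial
  have h1 : P *ᵥ (Pi.single j 1) = 0 := by
    rw [← hv, Matrix.mulVecLin_apply, Matrix.mulVec_mulVec, hPK, Matrix.zero_mulVec]
  simpa using congrFun h1 i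

theorem IsReachable.add_smul_one {m n : ℕ} {A : Matrix (Fin m) (Fin m) ℝ}
    {B : Matrix (Fin m) (Fin n) ℝ} (h : IsReachable A B) (δ : ℝ) :
    IsReachable (A + δ • (1 : Matrix (Fin m) (Fin m) ℝ)) B := by
  intro P hP
  refine h P fun k => ?_
  set A' := A + δ • (1 : Matrix (Fin m) (Fin m) ℝ) with hA'
  have key : ∀ k j : ℕ, P * (A' ^ j * (A ^ k * B)) = 0 := by
    intro k
    -- `k = 0` is the hypothesis; each step writes one factor `A` as `A' - δI`
    induction k with
    | zero => intro j; simpa using hP j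
    | succ k ih =>
      intro j
      have h1 : A' ^ j * (A ^ (k + 1) * B)
          = A' ^ (j + 1) * (A ^ k * B) - δ • (A' ^ j * (A ^ k * B)) := by
        have hA : A = A' - δ • (1 : Matrix (Fin m) (Fin m) ℝ) := by rw [hA']; abel
        rw [pow_succ' A, Matrix.mul_assoc A]
        nth_rewrite 1 [hA]
        rw [pow_succ A', Matrix.sub_mul, Matrix.mul_sub, Matrix.smul_mul, Matrix.one_mul,
          Matrix.mul_smul, Matrix.mul_assoc (A' ^ j)]
      rw [h1, Matrix.mul_sub, Matrix.mul_smul, ih, ih, smul_zero, sub_zero]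
  simpa using key k 0

/-! ### The cone of feasible matrix inequalities -/

/-- The linear part of the Kalman–Yakubovich–Popov matrix inequality, as a function of `P`:
the block matrix `[[PA + AᵀP, PB], [BᵀP, 0]]`. -/
def kypMap {m n : ℕ} (A : Matrix (Fin m) (Fin m) ℝ) (B : Matrix (Fin m) (Fin n) ℝ) :
    Matrix (Fin m) (Fin m) ℝ →ₗ[ℝ] Matrix (Fin m ⊕ Fin n) (Fin m ⊕ Fin n) ℝ where
  toFun P := fromBlocks (P * A + Aᵀ * P) (P * B) (Bᵀ * P) 0
  map_add' P Q := by
    simp only [Matrix.fromBlocks_add, Matrix.add_mul, Matrix.mul_add, add_zero]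
    congr 1; abel
  map_smul' c P := by
    simp [Matrix.fromBlocks_smul]

theorem kypMap_apply {m n : ℕ} (A : Matrix (Fin m) (Fin m) ℝ) (B : Matrix (Fin m) (Fin n) ℝ)
    (P : Matrix (Fin m) (Fin m) ℝ) :
    kypMap A B P = fromBlocks (P * A + Aᵀ * P) (P * B) (Bᵀ * P) 0 := rfl

theorem Matrix.PosSemidef.exists_eq_transpose_mul {κ : Type*} [Fintype κ] [DecidableEq κ]
    {M : Matrix κ κ ℝ} (h : M.PosSemidef) : ∃ N : Matrix κ κ ℝ, M = Nᵀ * N := by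
  open scoped MatrixOrder in
  obtain ⟨N, hN⟩ := CStarAlgebra.nonneg_iff_eq_star_mul_self.1 h.nonneg
  exact ⟨N, hN⟩

theorem Matrix.transpose_mul_self_eq_zero_real {κ l : Type*} [Fintype κ] [Fintype l]
    {N : Matrix κ l ℝ} (h : Nᵀ * N = 0) : N = 0 :=
  Matrix.conjTranspose_mul_self_eq_zero.1 h

/-- The zero lower right block forces `PB = 0`. Inductively `PAᵏB = 0` for all `k`, because
`VᵀF₁₁V = 0` for `V = AᵏB`, where `F₁₁ = PA + AᵀP ⪰ 0`, so that `F₁₁V = PAV` vanishes. -/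
theorem eq_zero_of_posSemidef_kypMap {m n : ℕ} {A : Matrix (Fin m) (Fin m) ℝ}
    {B : Matrix (Fin m) (Fin n) ℝ} (hc : IsReachable A B) {P : Matrix (Fin m) (Fin m) ℝ}
    (hP : Pᵀ = P) (h : (kypMap A B P).PosSemidef) : P = 0 := by
  obtain ⟨N, hN⟩ := h.exists_eq_transpose_mul
  obtain ⟨N1, N2, rfl⟩ : ∃ N1 N2, N = fromCols N1 N2 :=
    ⟨N.toCols₁, N.toCols₂, (fromCols_toCols N).symm⟩
  rw [kypMap_apply, transpose_fromCols, fromRows_mul_fromCols, fromBlocks_inj] at hN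
  obtain ⟨h11, h12, -, h22⟩ := hN
  have hN2 : N2 = 0 := Matrix.transpose_mul_self_eq_zero_real h22.symm
  rw [hN2, Matrix.mul_zero] at h12
  refine hc P fun k => ?_
  induction k with
  | zero => simpa using h12
  | succ k ih =>
    set V := A ^ k * B with hV
    have hV' : Vᵀ * P = 0 := by
      rw [← hP, ← Matrix.transpose_mul, ih, Matrix.transpose_zero]
    have h1 : (N1 * V)ᵀ * (N1 * V) = 0 := by
      calc (N1 * V)ᵀ * (N1 * V) = Vᵀ * (N1ᵀ * N1) * V := by
            simp only [Matrix.transpose_mul, Matrix.mul_assoc]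
        _ = (Vᵀ * P) * (A * V) + Vᵀ * Aᵀ * (P * V) := by
            rw [← h11]; simp only [Matrix.mul_add, Matrix.add_mul, Matrix.mul_assoc]
        _ = 0 := by rw [hV', ih]; simp
    have h2 := Matrix.transpose_mul_self_eq_zero_real h1
    have h3 : P * A * V + Aᵀ * (P * V) = N1ᵀ * (N1 * V) := by
      rw [← Matrix.mul_assoc N1ᵀ, ← h11, Matrix.add_mul, Matrix.mul_assoc Aᵀ]
    rw [h2, ih, Matrix.mul_zero, Matrix.mul_zero, add_zero] at h3
    rw [pow_succ', Matrix.mul_assoc, ← hV, ← Matrix.mul_assoc, h3]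

section Closed

attribute [local instance] Matrix.normedAddCommGroup Matrix.normedSpace

theorem isClosed_setOf_posSemidef {κ : Type*} [Fintype κ] :
    IsClosed {M : Matrix κ κ ℝ | M.PosSemidef} := by
  have h : {M : Matrix κ κ ℝ | M.PosSemidef} = {M : Matrix κ κ ℝ | Mᴴ = M} ∩
      ⋂ x : κ → ℝ, {M : Matrix κ κ ℝ | 0 ≤ star x ⬝ᵥ (M *ᵥ x)} := by
    ext M
    simp [Matrix.posSemidef_iff_dotProduct_mulVec, Matrix.IsHermitian]
  rw [h]
  exact IsClosed.inter (isClosed_eq (by fun_prop) continuous_id)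
    (isClosed_iInter fun x => isClosed_le continuous_const (by fun_prop))

/-- Feasible `P` are bounded in terms of `M`: otherwise, normalizing and passing to a limit on the
unit sphere would give a symmetric `Q ≠ 0` with `-kypMap A B Q ⪰ 0`. -/
theorem kypMap_bound {m n : ℕ} {A : Matrix (Fin m) (Fin m) ℝ}
    {B : Matrix (Fin m) (Fin n) ℝ} (hc : IsReachable A B) :
    ∃ c : ℝ, ∀ P M, Pᵀ = P → (M - kypMap A B P).PosSemidef → ‖P‖ ≤ c * ‖M‖ := by
  by_contra! hcon
  choose P M hsymm hpsd hlt using fun j : ℕ => hcon (j + 1)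
  have hpos : ∀ j, 0 < ‖P j‖ := fun j => lt_of_le_of_lt (by positivity) (hlt j)
  set P' := fun j => ‖P j‖⁻¹ • P j with hP'
  set M' := fun j => ‖P j‖⁻¹ • M j with hM'
  have hsph : ∀ j, P' j ∈ Metric.sphere (0 : Matrix (Fin m) (Fin m) ℝ) 1 := by
    intro j
    simp [hP', norm_smul, (hpos j).ne']
  have hM0 : Filter.Tendsto M' Filter.atTop (nhds 0) := by
    refine squeeze_zero_norm (fun j => ?_) tendsto_one_div_add_atTop_nhds_zero_nat
    rw [hM', norm_smul, norm_inv, norm_norm, inv_mul_le_iff₀ (hpos j), mul_one_div,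
      le_div_iff₀ (by positivity), mul_comm]
    exact (hlt j).le
  have : ProperSpace (Matrix (Fin m) (Fin m) ℝ) := FiniteDimensional.proper ℝ _
  obtain ⟨Q, hQ, φ, hφ, hlim⟩ := (isCompact_sphere (0 : Matrix (Fin m) (Fin m) ℝ) 1).tendsto_subseq hsph
  have hF : Continuous (kypMap A B) := LinearMap.continuous_of_finiteDimensional _
  have hQs : Qᵀ = Q := by
    refine tendsto_nhds_unique (((continuous_id.matrix_transpose).tendsto Q).comp hlim) ?_
    refine hlim.congr fun j => ?_
    simp [hP', hsymm]
  have hlim2 : Filter.Tendsto (fun j => M' (φ j) - kypMap A B (P' (φ j))) Filter.atTop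
      (nhds (0 - kypMap A B Q)) :=
    (hM0.comp hφ.tendsto_atTop).sub ((hF.tendsto Q).comp hlim)
  have hpsdQ := isClosed_setOf_posSemidef.mem_of_tendsto hlim2 (Filter.Eventually.of_forall
    fun j => by
      have := (hpsd (φ j)).smul (inv_nonneg.2 (hpos (φ j)).le)
      simpa [hP', hM', smul_sub] using this)
  have h0 : -Q = 0 := by
    refine eq_zero_of_posSemidef_kypMap hc (by simp [hQs]) ?_
    simpa using hpsdQ
  have : ‖Q‖ = 1 := by simpa using hQ
  rw [neg_eq_zero.1 h0] at this
  simp at this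

theorem isClosed_kypCone {m n : ℕ} {A : Matrix (Fin m) (Fin m) ℝ}
    {B : Matrix (Fin m) (Fin n) ℝ} (hc : IsReachable A B) :
    IsClosed {M | ∃ P, Pᵀ = P ∧ (M - kypMap A B P).PosSemidef} := by
  obtain ⟨c, hcb⟩ := kypMap_bound hc
  have : SequentialSpace (Matrix (Fin m ⊕ Fin n) (Fin m ⊕ Fin n) ℝ) :=
    inferInstanceAs (SequentialSpace (Fin m ⊕ Fin n → Fin m ⊕ Fin n → ℝ))
  rw [← isSeqClosed_iff_isClosed]
  intro M M₀ hM hlim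
  choose P hsymm hpsd using hM
  obtain ⟨R, hR⟩ := hlim.norm.bddAbove_range
  have : ProperSpace (Matrix (Fin m) (Fin m) ℝ) := FiniteDimensional.proper ℝ _
  have hbd : ∀ j, P j ∈ Metric.closedBall (0 : Matrix (Fin m) (Fin m) ℝ) (|c| * R) := by
    intro j
    rw [mem_closedBall_zero_iff]
    calc ‖P j‖ ≤ c * ‖M j‖ := hcb _ _ (hsymm j) (hpsd j)
      _ ≤ |c| * ‖M j‖ := by gcongr; exact le_abs_self c
      _ ≤ |c| * R := by gcongr; exact hR ⟨j, rfl⟩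
  obtain ⟨Q, -, φ, hφ, hlimP⟩ := (isCompact_closedBall _ _).tendsto_subseq hbd
  have hF : Continuous (kypMap A B) := LinearMap.continuous_of_finiteDimensional _
  refine ⟨Q, ?_, ?_⟩
  · refine tendsto_nhds_unique (((continuous_id.matrix_transpose).tendsto Q).comp hlimP) ?_
    refine hlimP.congr fun j => ?_
    simp [hsymm]
  · exact isClosed_setOf_posSemidef.mem_of_tendsto
      ((hlim.comp hφ.tendsto_atTop).sub ((hF.tendsto Q).comp hlimP))
      (Filter.Eventually.of_forall fun j => hpsd (φ j))

/-- Separation for the matrix inequality `M₀ - kypMap A B P ⪰ 0`: it is solvable as soon as `M₀`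
pairs nonnegatively with every `NNᵀ` that annihilates the range of `kypMap A B` on symmetric
matrices. -/
theorem exists_kyp_certificate {m n : ℕ} {A : Matrix (Fin m) (Fin m) ℝ}
    {B : Matrix (Fin m) (Fin n) ℝ} (hc : IsReachable A B)
    (M₀ : Matrix (Fin m ⊕ Fin n) (Fin m ⊕ Fin n) ℝ) (hM₀ : M₀ᵀ = M₀)
    (hdual : ∀ N : Matrix (Fin m ⊕ Fin n) (Fin m ⊕ Fin n) ℝ,
      (∀ P, Pᵀ = P → (Nᵀ * kypMap A B P * N).trace = 0) → 0 ≤ (Nᵀ * M₀ * N).trace) :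
    ∃ P, Pᵀ = P ∧ (M₀ - kypMap A B P).PosSemidef := by
  set K := {M | ∃ P, Pᵀ = P ∧ (M - kypMap A B P).PosSemidef} with hK
  by_contra hnot
  have hconv : Convex ℝ K := by
    rintro M ⟨P, hP, h⟩ M' ⟨P', hP', h'⟩ a b ha hb -
    refine ⟨a • P + b • P', by simp [hP, hP'], ?_⟩
    have := (h.smul ha).add (h'.smul hb)
    convert this using 1
    simp only [map_add, map_smul, smul_sub]; abel
  have : LocallyConvexSpace ℝ (Matrix (Fin m ⊕ Fin n) (Fin m ⊕ Fin n) ℝ) :=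
    inferInstanceAs (LocallyConvexSpace ℝ (Fin m ⊕ Fin n → Fin m ⊕ Fin n → ℝ))
  obtain ⟨f, u, hfu, hf⟩ := geometric_hahn_banach_point_closed hconv (isClosed_kypCone hc) hnot
  have hsmul : ∀ M ∈ K, ∀ t : ℝ, 0 ≤ t → t • M ∈ K := by
    rintro M ⟨P, hP, h⟩ t ht
    refine ⟨t • P, by simp [hP], ?_⟩
    simpa [smul_sub] using h.smul ht
  have hu : u < 0 := by
    have := hf 0 ⟨0, by simp, by simpa using Matrix.PosSemidef.zero⟩
    simpa using this
  have hfK : ∀ M ∈ K, 0 ≤ f M := by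
    intro M hM
    by_contra! hneg
    have := hf _ (hsmul M hM (u / f M) (div_nonneg_of_nonpos hu.le hneg.le))
    rw [map_smul, smul_eq_mul, div_mul_cancel₀ _ hneg.ne] at this
    exact lt_irrefl _ this
  have hfpsd : ∀ S : Matrix (Fin m ⊕ Fin n) (Fin m ⊕ Fin n) ℝ, S.PosSemidef → 0 ≤ f S :=
    fun S hS => hfK S ⟨0, by simp, by simpa using hS⟩
  have hfF : ∀ P, Pᵀ = P → f (kypMap A B P) = 0 := by
    intro P hP
    have h1 := hfK (kypMap A B P) ⟨P, hP, by simpa using Matrix.PosSemidef.zero⟩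
    have h2 := hfK (-kypMap A B P) ⟨-P, by simp [hP], by simpa using Matrix.PosSemidef.zero⟩
    rw [map_neg] at h2
    linarith
  -- on symmetric matrices `f` is the trace pairing with the symmetric matrix `Z`
  set Z : Matrix (Fin m ⊕ Fin n) (Fin m ⊕ Fin n) ℝ :=
    Matrix.of fun i j => (f (Matrix.single i j 1) + f (Matrix.single j i 1)) / 2 with hZ
  have hfZ : ∀ M : Matrix (Fin m ⊕ Fin n) (Fin m ⊕ Fin n) ℝ, Mᵀ = M → f M = (Z * M).trace := by
    intro M hM
    have h1 : f M = ∑ i, ∑ j, M i j * f (Matrix.single i j 1) := by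
      conv_lhs => rw [Matrix.matrix_eq_sum_single M]
      simp only [map_sum]
      refine Finset.sum_congr rfl fun i _ => Finset.sum_congr rfl fun j _ => ?_
      rw [← smul_eq_mul, ← map_smul, Matrix.smul_single, smul_eq_mul, mul_one]
    have h2 : f M = ∑ i, ∑ j, M i j * f (Matrix.single j i 1) := by
      rw [h1, Finset.sum_comm]
      refine Finset.sum_congr rfl fun i _ => Finset.sum_congr rfl fun j _ => ?_
      rw [← congrFun (congrFun hM i) j, Matrix.transpose_apply]
    have h3 : (Z * M).trace = ∑ i, ∑ j, M i j * Z i j := by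
      simp only [Matrix.trace, Matrix.diag_apply, Matrix.mul_apply]
      refine Finset.sum_congr rfl fun i _ => Finset.sum_congr rfl fun j _ => ?_
      rw [← congrFun (congrFun hM j) i, Matrix.transpose_apply, mul_comm]
    have h4 : (Z * M).trace = (f M + f M) / 2 := by
      rw [h3]
      nth_rewrite 1 [h1]
      rw [h2, ← Finset.sum_add_distrib, Finset.sum_div]
      refine Finset.sum_congr rfl fun i _ => ?_
      rw [← Finset.sum_add_distrib, Finset.sum_div]
      refine Finset.sum_congr rfl fun j _ => ?_
      simp only [hZ, Matrix.of_apply]; ring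
    rw [h4]; ring
  have hZpsd : Z.PosSemidef := by
    refine Matrix.PosSemidef.of_dotProduct_mulVec_nonneg ?_ fun x => ?_
    · ext i j
      simp [hZ, add_comm]
    · have h1 := hfpsd _ (Matrix.posSemidef_vecMulVec_self_star x)
      rw [hfZ _ (by simp [Matrix.transpose_vecMulVec])] at h1
      rwa [Matrix.mul_vecMulVec, Matrix.trace_vecMulVec, dotProduct_comm] at h1
  obtain ⟨N, hN⟩ := hZpsd.exists_eq_transpose_mul
  have hfN : ∀ M : Matrix (Fin m ⊕ Fin n) (Fin m ⊕ Fin n) ℝ, Mᵀ = M →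
      f M = (Nᵀᵀ * M * Nᵀ).trace := by
    intro M hM
    rw [hfZ M hM, hN, Matrix.transpose_transpose, Matrix.trace_mul_comm (N * M), Matrix.mul_assoc]
  have := hdual Nᵀ fun P hP => by
    rw [← hfN _ ?_, hfF P hP]
    rw [kypMap_apply, Matrix.fromBlocks_transpose]
    simp [hP, add_comm]
  rw [← hfN _ hM₀] at this
  linarith

end Closed

/-! ### Unitary matrices -/

/-- Two matrices with the same Gram matrix of rows differ by a unitary factor on the right: the
isometry `Eᴴw ↦ Fᴴw` from the range of `Eᴴ` extends to the whole space. -/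
theorem exists_unitary_of_mul_conjTranspose_eq {μ κ : Type*} [Fintype μ] [Fintype κ]
    [DecidableEq μ] [DecidableEq κ] (E F : Matrix μ κ ℂ) (h : E * Eᴴ = F * Fᴴ) :
    ∃ V ∈ Matrix.unitaryGroup κ ℂ, E = F * V := by
  set e := Matrix.toEuclideanLin Eᴴ with he
  set f := Matrix.toEuclideanLin Fᴴ with hf
  have key : ∀ (M : Matrix μ κ ℂ) w, inner ℂ (Matrix.toEuclideanLin Mᴴ w) (Matrix.toEuclideanLin Mᴴ w)
      = inner ℂ w (Matrix.toEuclideanLin (M * Mᴴ) w) := by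
    intro M w
    rw [Matrix.toEuclideanLin_conjTranspose_eq_adjoint, LinearMap.adjoint_inner_left,
      ← Matrix.toEuclideanLin_conjTranspose_eq_adjoint]
    simp [Matrix.toEuclideanLin, Matrix.toLpLin_apply, Matrix.mulVec_mulVec]
  have hn : ∀ w, ‖f w‖ = ‖e w‖ := by
    intro w
    have : inner ℂ (f w) (f w) = inner ℂ (e w) (e w) := by rw [key, key, h]
    rw [inner_self_eq_norm_sq_to_K, inner_self_eq_norm_sq_to_K] at this
    have h2 : ‖f w‖ ^ 2 = ‖e w‖ ^ 2 := by exact_mod_cast this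
    exact (sq_eq_sq₀ (norm_nonneg _) (norm_nonneg _)).1 h2
  -- `Eᴴw ↦ Fᴴw` is well defined and isometric on the range of `Eᴴ`
  have hker : LinearMap.ker e ≤ LinearMap.ker f := by
    intro w hw
    rw [LinearMap.mem_ker] at *
    rw [← norm_eq_zero, hn, hw, norm_zero]
  let L0 : LinearMap.range e →ₗ[ℂ] EuclideanSpace ℂ κ :=
    ((LinearMap.ker e).liftQ f hker) ∘ₗ (LinearMap.quotKerEquivRange e).symm.toLinearMap
  have hL0 : ∀ w, L0 ⟨e w, LinearMap.mem_range_self e w⟩ = f w := by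
    intro w
    have : (LinearMap.quotKerEquivRange e).symm ⟨e w, LinearMap.mem_range_self e w⟩
        = Submodule.Quotient.mk w := by
      rw [LinearEquiv.symm_apply_eq]; rfl
    simp [L0, this]
  let L : LinearMap.range e →ₗᵢ[ℂ] EuclideanSpace ℂ κ := ⟨L0, by
    rintro ⟨_, w, rfl⟩
    rw [hL0, hn]; rfl⟩
  have hT : ∀ w, L.extend (e w) = f w := by
    intro w
    rw [← hL0]
    exact L.extend_apply ⟨e w, LinearMap.mem_range_self e w⟩
  set V := Matrix.toEuclideanLin.symm L.extend.toLinearMap with hV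
  have hV' : Matrix.toEuclideanLin V = L.extend.toLinearMap := by simp [hV]
  have h1 : V * Eᴴ = Fᴴ := by
    apply Matrix.toEuclideanLin.injective
    ext1 w
    have := hT w
    rw [← LinearIsometry.coe_toLinearMap, ← hV'] at this
    simpa [Matrix.toEuclideanLin, Matrix.toLpLin_apply, he, hf, Matrix.mulVec_mulVec] using this
  have h2 : Vᴴ * V = 1 := by
    apply Matrix.toEuclideanLin.injective
    ext1 w
    refine ext_inner_left ℂ fun v => ?_
    have h3 : Matrix.toEuclideanLin (Vᴴ * V) w
        = Matrix.toEuclideanLin Vᴴ (Matrix.toEuclideanLin V w) := by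
      simp [Matrix.toEuclideanLin, Matrix.toLpLin_apply, Matrix.mulVec_mulVec]
    rw [h3, Matrix.toEuclideanLin_conjTranspose_eq_adjoint, LinearMap.adjoint_inner_right, hV']
    simp [Matrix.toEuclideanLin]
  refine ⟨V, Matrix.mem_unitaryGroup_iff'.2 h2, ?_⟩
  have h4 : F = E * Vᴴ := by
    rw [← conjTranspose_conjTranspose F, ← h1]; simp
  rw [h4, Matrix.mul_assoc, h2, Matrix.mul_one]

/-- Unitary matrices are unitarily diagonalizable. The proof takes `c` on the unit circle which is
not an eigenvalue of `V` and applies the spectral theorem to the Cayley transform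
`H = i(V + c)(V - c)⁻¹`, which is Hermitian. -/
theorem exists_unitary_diagonalization {κ : Type*} [Fintype κ] [DecidableEq κ]
    (V : Matrix κ κ ℂ) (hV : V ∈ Matrix.unitaryGroup κ ℂ) :
    ∃ Q ∈ Matrix.unitaryGroup κ ℂ, ∃ d : κ → ℂ, (∀ j, ‖d j‖ = 1) ∧
      V * Q = Q * Matrix.diagonal d := by
  have hV1 : Vᴴ * V = 1 := Matrix.mem_unitaryGroup_iff'.1 hV
  obtain ⟨c, hc, hdet⟩ : ∃ c : ℂ, ‖c‖ = 1 ∧ (V - c • 1).det ≠ 0 := by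
    have hfin : {c : ℂ | V.charpoly.IsRoot c}.Finite :=
      Polynomial.finite_setOfPred_isRoot (Matrix.charpoly_monic V).ne_zero
    have hinf : (Metric.sphere (0:ℂ) 1).Infinite := by
      refine IsPreconnected.infinite_of_nontrivial
        (isPreconnected_sphere (by simp [Complex.rank_real_complex]) 0 1) ?_
      exact ⟨1, by simp, -1, by simp, by norm_num⟩
    obtain ⟨c, hc, hc'⟩ := hinf.exists_notMem_finite hfin
    refine ⟨c, by simpa using hc, fun h0 => hc' ?_⟩
    simp only [Set.mem_ofPred_eq, Polynomial.IsRoot.def, Matrix.eval_charpoly]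
    rw [← neg_sub, Matrix.det_neg, Matrix.scalar_apply, ← Matrix.smul_one_eq_diagonal, h0,
      mul_zero]
  have hcc : star c * c = 1 := by
    rw [Complex.star_def, ← Complex.normSq_eq_conj_mul_self, Complex.normSq_eq_norm_sq, hc]; simp
  set W := V - c • (1 : Matrix κ κ ℂ) with hW
  have hu : IsUnit W.det := isUnit_iff_ne_zero.2 hdet
  have hWi : W * W⁻¹ = 1 := Matrix.mul_nonsing_inv _ hu
  have hWi' : W⁻¹ * W = 1 := Matrix.nonsing_inv_mul _ hu
  set H := Complex.I • ((V + c • 1) * W⁻¹) with hH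
  have hHW : H * W = Complex.I • (V + c • 1) := by
    rw [hH, Matrix.smul_mul, Matrix.mul_assoc, hWi', Matrix.mul_one]
  have hHerm : H.IsHermitian := by
    have h1 : Wᴴ * Hᴴ * W = Wᴴ * H * W := by
      rw [← Matrix.conjTranspose_mul, Matrix.mul_assoc, hHW, hW]
      simp only [Matrix.add_mul, Matrix.mul_sub, Matrix.sub_mul, Matrix.mul_add,
        Matrix.conjTranspose_sub, Matrix.conjTranspose_add, Matrix.conjTranspose_smul,
        Matrix.conjTranspose_one, Matrix.smul_mul, Matrix.mul_smul, Matrix.one_mul,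
        Matrix.mul_one, hV1, Complex.star_def, Complex.conj_I]
      simp only [Complex.star_def] at hcc
      match_scalars <;> first | ring1 | linear_combination (2 * Complex.I) * hcc
    have hcan : ∀ K : Matrix κ κ ℂ, (W⁻¹)ᴴ * (Wᴴ * K * W) * W⁻¹ = K := by
      intro K
      have : (W⁻¹)ᴴ * Wᴴ = 1 := by rw [← Matrix.conjTranspose_mul, hWi]; simp
      calc (W⁻¹)ᴴ * (Wᴴ * K * W) * W⁻¹ = ((W⁻¹)ᴴ * Wᴴ) * K * (W * W⁻¹) := by
            simp only [Matrix.mul_assoc]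
        _ = K := by rw [this, hWi]; simp
    have := congrArg (fun K => (W⁻¹)ᴴ * K * W⁻¹) h1
    simp only [hcan] at this
    exact this
  set Q : Matrix κ κ ℂ := (hHerm.eigenvectorUnitary : Matrix κ κ ℂ) with hQ
  have hQu : Q ∈ Matrix.unitaryGroup κ ℂ := hHerm.eigenvectorUnitary.2
  have hQ1 : Qᴴ * Q = 1 := Matrix.mem_unitaryGroup_iff'.1 hQu
  have hQ2 : Q * Qᴴ = 1 := Matrix.mem_unitaryGroup_iff.1 hQu
  have hspec : Qᴴ * H = diagonal (fun j => (hHerm.eigenvalues j : ℂ)) * Qᴴ := by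
    have h1 : H = Q * diagonal (fun j => (hHerm.eigenvalues j : ℂ)) * Qᴴ := by
      have := hHerm.spectral_theorem
      rw [Unitary.conjStarAlgAut_apply] at this
      exact this
    conv_lhs => rw [h1]
    rw [Matrix.mul_assoc Q, ← Matrix.mul_assoc, hQ1, Matrix.one_mul]
  set μ := hHerm.eigenvalues
  have hne : ∀ j, (μ j : ℂ) - Complex.I ≠ 0 := by
    intro j h0
    have := congrArg Complex.im h0
    simp at this
  set V' := Qᴴ * V * Q with hV'
  have h1 : diagonal (fun j => (μ j : ℂ)) * (V' - c • 1) = Complex.I • (V' + c • 1) := by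
    have h2 : Qᴴ * (H * W) * Q = Qᴴ * (Complex.I • (V + c • 1)) * Q := by rw [hHW]
    rw [← Matrix.mul_assoc Qᴴ H W, hspec] at h2
    have h3 : Qᴴ * W * Q = V' - c • 1 := by
      simp [hW, hV', Matrix.mul_sub, Matrix.sub_mul, hQ1]
    have h4 : Qᴴ * (Complex.I • (V + c • 1)) * Q = Complex.I • (V' + c • 1) := by
      simp [hV', Matrix.mul_add, Matrix.add_mul, hQ1]
    rw [← h3, ← h4, ← h2]
    simp only [Matrix.mul_assoc]
  -- in the eigenbasis of `H`, invert the Cayley transform entry by entry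
  refine ⟨Q, hQu, fun j => c * (μ j + Complex.I) / (μ j - Complex.I), fun j => ?_, ?_⟩
  · have : (μ j : ℂ) + Complex.I = star ((μ j : ℂ) - Complex.I) := by simp
    rw [norm_div, norm_mul, hc, this, norm_star, one_mul,
      div_self (norm_ne_zero_iff.2 (hne j))]
  · have h5 : V' = diagonal (fun j => c * (μ j + Complex.I) / (μ j - Complex.I)) := by
      ext i j
      have h6 := congrFun (congrFun h1 i) j
      simp only [Matrix.diagonal_mul, Matrix.sub_apply, Matrix.smul_apply, Matrix.add_apply,
        smul_eq_mul] at h6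
      by_cases hij : i = j
      · subst hij
        rw [Matrix.diagonal_apply_eq, eq_div_iff (hne i)]
        simp only [Matrix.one_apply_eq] at h6
        linear_combination h6
      · rw [Matrix.diagonal_apply_ne _ hij]
        simp only [Matrix.one_apply_ne hij] at h6
        have h7 : ((μ i : ℂ) - Complex.I) * V' i j = 0 := by linear_combination h6
        exact (mul_eq_zero.1 h7).resolve_left (hne i)
    rw [← h5, hV', ← Matrix.mul_assoc, ← Matrix.mul_assoc, hQ2, Matrix.one_mul]

/-! ### Frequency conditions and the dual inequality -/

theorem map_ofReal_mul {l μ κ : Type*} [Fintype μ] (M : Matrix l μ ℝ) (N : Matrix μ κ ℝ) :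
    (M * N).map Complex.ofReal = M.map Complex.ofReal * N.map Complex.ofReal :=
  Matrix.map_mul (f := Complex.ofRealHom)

theorem map_ofReal_add {μ κ : Type*} (M N : Matrix μ κ ℝ) :
    (M + N).map Complex.ofReal = M.map Complex.ofReal + N.map Complex.ofReal :=
  Matrix.map_add _ Complex.ofReal_add M N

theorem map_ofReal_sub {μ κ : Type*} (M N : Matrix μ κ ℝ) :
    (M - N).map Complex.ofReal = M.map Complex.ofReal - N.map Complex.ofReal :=
  Matrix.map_sub _ Complex.ofReal_sub M N

theorem map_ofReal_smul {μ κ : Type*} (c : ℝ) (M : Matrix μ κ ℝ) :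
    (c • M).map Complex.ofReal = (c : ℂ) • M.map Complex.ofReal := by
  ext; simp

theorem map_ofReal_one {κ : Type*} [DecidableEq κ] :
    (1 : Matrix κ κ ℝ).map Complex.ofReal = 1 :=
  Matrix.map_one _ Complex.ofReal_zero Complex.ofReal_one

theorem map_ofReal_zero {μ κ : Type*} :
    (0 : Matrix μ κ ℝ).map Complex.ofReal = 0 := by
  ext; simp

theorem map_ofReal_transpose {μ κ : Type*} (M : Matrix μ κ ℝ) :
    Mᵀ.map Complex.ofReal = (M.map Complex.ofReal)ᴴ := by
  ext; simp

/-- The data being real, `G(s̄)ᵀ` is the conjugate transpose of `G(s)`. -/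
theorem transferFn_conj_transpose {m n : ℕ} (A : Matrix (Fin m) (Fin m) ℝ)
    (B : Matrix (Fin m) (Fin n) ℝ) (C : Matrix (Fin n) (Fin m) ℝ)
    (D : Matrix (Fin n) (Fin n) ℝ) (s : ℂ) :
    (transferFn A B C D ((starRingEnd ℂ) s))ᵀ = (transferFn A B C D s)ᴴ := by
  have hT : ∀ {μ κ : Type} (M : Matrix μ κ ℝ),
      (M.map Complex.ofReal)ᵀ = (M.map Complex.ofReal)ᴴ := by
    intro μ κ M; ext; simp
  simp only [transferFn, Matrix.transpose_add, Matrix.transpose_mul, Matrix.conjTranspose_add,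
    Matrix.conjTranspose_mul, Matrix.transpose_nonsing_inv, Matrix.conjTranspose_nonsing_inv,
    Matrix.transpose_sub, Matrix.conjTranspose_sub, Matrix.transpose_smul,
    Matrix.conjTranspose_smul, Matrix.transpose_one, Matrix.conjTranspose_one, hT]
  rfl

/-- On a solution of `Ax + Bu = sx` the quadratic form of `[[0, Cᵀ], [C, D + Dᵀ]]` at `(x, u)` equals
`uᴴ(G(s) + G(s)ᴴ)u`, since `x = (sI - A)⁻¹Bu`. -/
theorem kyp_form_nonneg {m n : ℕ} {A : Matrix (Fin m) (Fin m) ℝ}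
    {B : Matrix (Fin m) (Fin n) ℝ} {C : Matrix (Fin n) (Fin m) ℝ}
    {D : Matrix (Fin n) (Fin n) ℝ} {s : ℂ}
    (hdet : IsUnit (s • (1 : Matrix (Fin m) (Fin m) ℂ) - A.map Complex.ofReal).det)
    (hG : (transferFn A B C D s + (transferFn A B C D ((starRingEnd ℂ) s))ᵀ).PosSemidef)
    {x : Fin m → ℂ} {u : Fin n → ℂ}
    (h : A.map Complex.ofReal *ᵥ x + B.map Complex.ofReal *ᵥ u = s • x) :
    0 ≤ star x ⬝ᵥ ((C.map Complex.ofReal)ᴴ *ᵥ u) + star u ⬝ᵥ (C.map Complex.ofReal *ᵥ x)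
      + star u ⬝ᵥ ((D.map Complex.ofReal + (D.map Complex.ofReal)ᴴ) *ᵥ u) := by
  have hx : x = (s • (1 : Matrix (Fin m) (Fin m) ℂ) - A.map Complex.ofReal)⁻¹ *ᵥ
      (B.map Complex.ofReal *ᵥ u) := by
    have : B.map Complex.ofReal *ᵥ u
        = (s • (1 : Matrix (Fin m) (Fin m) ℂ) - A.map Complex.ofReal) *ᵥ x := by
      rw [Matrix.sub_mulVec, Matrix.smul_mulVec, Matrix.one_mulVec, ← h]; abel
    rw [this, Matrix.mulVec_mulVec, Matrix.nonsing_inv_mul _ hdet, Matrix.one_mulVec]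
  have hGu : transferFn A B C D s *ᵥ u
      = C.map Complex.ofReal *ᵥ x + D.map Complex.ofReal *ᵥ u := by
    rw [hx, transferFn, Matrix.add_mulVec]
    simp only [Matrix.mulVec_mulVec, Matrix.mul_assoc]
  have h1 := hG.dotProduct_mulVec_nonneg u
  rw [transferFn_conj_transpose, Matrix.add_mulVec, dotProduct_add] at h1
  have hadj : ∀ {p q : ℕ} (M : Matrix (Fin p) (Fin q) ℂ) (v : Fin q → ℂ) (w : Fin p → ℂ),
      star v ⬝ᵥ (Mᴴ *ᵥ w) = star (M *ᵥ v) ⬝ᵥ w := by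
    intro p q M v w
    rw [Matrix.star_mulVec, ← Matrix.dotProduct_mulVec]
  rw [hadj, hGu] at h1
  rw [hadj, Matrix.add_mulVec, dotProduct_add, hadj]
  rw [star_add, add_dotProduct, dotProduct_add] at h1
  convert h1 using 1
  ring

/-- The dual half of the positive real lemma: under the frequency condition on the imaginary axis
and at infinity, `[[0, Cᵀ], [C, D + Dᵀ]]` pairs nonnegatively with every `NNᵀ` that annihilates the
range of `kypMap A B`. -/
theorem kyp_dual {m n : ℕ} {A : Matrix (Fin m) (Fin m) ℝ}
    {B : Matrix (Fin m) (Fin n) ℝ} {C : Matrix (Fin n) (Fin m) ℝ}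
    {D : Matrix (Fin n) (Fin n) ℝ}
    (hfreq : ∀ s : ℂ, s.re = 0 →
      IsUnit (s • (1 : Matrix (Fin m) (Fin m) ℂ) - A.map Complex.ofReal).det ∧
      (transferFn A B C D s + (transferFn A B C D ((starRingEnd ℂ) s))ᵀ).PosSemidef)
    (hD : (D.map Complex.ofReal + (D.map Complex.ofReal)ᴴ).PosSemidef)
    (N : Matrix (Fin m ⊕ Fin n) (Fin m ⊕ Fin n) ℝ)
    (hN : ∀ P, Pᵀ = P → (Nᵀ * kypMap A B P * N).trace = 0) :
    0 ≤ (Nᵀ * fromBlocks 0 Cᵀ C (D + Dᵀ) * N).trace := by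
  obtain ⟨X, U, rfl⟩ : ∃ X U, N = fromRows X U :=
    ⟨N.toRows₁, N.toRows₂, (fromRows_toRows N).symm⟩
  set Y := A * X + B * U with hY
  have hXY : Y * Xᵀ + X * Yᵀ = 0 := by
    set R := Y * Xᵀ + X * Yᵀ with hR
    have hRs : Rᵀ = R := by simp [hR, add_comm]
    -- tested against `P = R` itself, the annihilation condition reads `tr R² = 0`
    have h1 := hN R hRs
    have h2 : (fromRows X U)ᵀ * kypMap A B R * fromRows X U = Xᵀ * R * Y + Yᵀ * R * X := by
      rw [kypMap_apply, transpose_fromRows, fromCols_mul_fromBlocks, fromCols_mul_fromRows, hY]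
      simp only [Matrix.mul_add, Matrix.add_mul, Matrix.transpose_add, Matrix.transpose_mul,
        Matrix.mul_assoc, Matrix.mul_zero, add_zero]
      abel
    rw [h2, Matrix.trace_add, Matrix.mul_assoc, Matrix.trace_mul_comm, Matrix.mul_assoc,
      Matrix.mul_assoc, Matrix.trace_mul_comm Yᵀ, Matrix.mul_assoc, ← Matrix.trace_add,
      ← Matrix.mul_add, ← hR] at h1
    have h3 : (Rᴴ * R).trace = 0 := by
      rw [Matrix.conjTranspose_eq_transpose_of_trivial, hRs]; exact h1
    exact Matrix.trace_conjTranspose_mul_self_eq_zero_iff.1 h3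
  set Xc := X.map Complex.ofReal with hXc
  set Uc := U.map Complex.ofReal with hUc
  set Yc := Y.map Complex.ofReal with hYc
  have hXYc : Yc * Xcᴴ + Xc * Ycᴴ = 0 := by
    rw [hYc, hXc, ← map_ofReal_transpose, ← map_ofReal_transpose, ← map_ofReal_mul,
      ← map_ofReal_mul, ← map_ofReal_add, hXY, map_ofReal_zero]
  obtain ⟨V, hV, hVe⟩ := exists_unitary_of_mul_conjTranspose_eq (Xc + Yc) (Xc - Yc) (by
    have h2 : (Xc + Yc) * (Xc + Yc)ᴴ = (Xc - Yc) * (Xc - Yc)ᴴ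
        + (2 : ℂ) • (Yc * Xcᴴ + Xc * Ycᴴ) := by
      simp only [Matrix.conjTranspose_add, Matrix.conjTranspose_sub, Matrix.mul_add,
        Matrix.add_mul, Matrix.mul_sub, Matrix.sub_mul]
      module
    rw [h2, hXYc, smul_zero, add_zero])
  obtain ⟨Q, hQ, d, hd, hVQ⟩ := exists_unitary_diagonalization V hV
  have hQ2 : Q * Qᴴ = 1 := Matrix.mem_unitaryGroup_iff.1 hQ
  have hdiag : (Xc + Yc) * Q = (Xc - Yc) * Q * diagonal d := by
    rw [hVe, Matrix.mul_assoc, hVQ, Matrix.mul_assoc]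
  set Cc := C.map Complex.ofReal with hCc
  set Dc := D.map Complex.ofReal with hDc
  -- the trace is unchanged when `N` is replaced by `NQ`, and is then a sum over columns
  have htr : (((fromRows X U)ᵀ * fromBlocks 0 Cᵀ C (D + Dᵀ) * fromRows X U).trace : ℂ)
      = ∑ j, (star ((Xc * Q).col j) ⬝ᵥ (Ccᴴ *ᵥ (Uc * Q).col j)
        + star ((Uc * Q).col j) ⬝ᵥ (Cc *ᵥ (Xc * Q).col j)
        + star ((Uc * Q).col j) ⬝ᵥ ((Dc + Dcᴴ) *ᵥ (Uc * Q).col j)) := by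
    have hent : ∀ {p q : ℕ} (F : Matrix (Fin p) (Fin m ⊕ Fin n) ℂ) (M : Matrix (Fin p) (Fin q) ℂ)
        (F' : Matrix (Fin q) (Fin m ⊕ Fin n) ℂ) j,
        star (F.col j) ⬝ᵥ (M *ᵥ F'.col j) = (Fᴴ * (M * F')) j j := by
      intro p q F M F' j
      rw [Matrix.mul_apply']
      rfl
    simp only [hent, ← Matrix.add_apply]
    change _ = Matrix.trace _
    have h1 : ((Xc * Q)ᴴ * (Ccᴴ * (Uc * Q)) + (Uc * Q)ᴴ * (Cc * (Xc * Q))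
        + (Uc * Q)ᴴ * ((Dc + Dcᴴ) * (Uc * Q)))
        = Qᴴ * ((Xcᴴ * (Ccᴴ * Uc) + Ucᴴ * (Cc * Xc) + Ucᴴ * ((Dc + Dcᴴ) * Uc)) * Q) := by
      simp only [Matrix.conjTranspose_mul, Matrix.mul_add, Matrix.add_mul, Matrix.mul_assoc]
    rw [h1, Matrix.trace_mul_comm Qᴴ, Matrix.mul_assoc _ Q, hQ2, Matrix.mul_one]
    have h2 : (fromRows X U)ᵀ * fromBlocks 0 Cᵀ C (D + Dᵀ) * fromRows X U
        = Xᵀ * (Cᵀ * U) + Uᵀ * (C * X) + Uᵀ * ((D + Dᵀ) * U) := by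
      rw [transpose_fromRows, fromCols_mul_fromBlocks, fromCols_mul_fromRows]
      simp only [Matrix.add_mul, Matrix.mul_assoc, Matrix.mul_add, Matrix.mul_zero, zero_add]
      abel
    rw [h2]
    have h3 : ∀ M : Matrix (Fin m ⊕ Fin n) (Fin m ⊕ Fin n) ℝ,
        ((M.trace : ℝ) : ℂ) = (M.map Complex.ofReal).trace := by
      intro M; simp [Matrix.trace]
    rw [h3]
    simp only [map_ofReal_add, map_ofReal_mul, map_ofReal_transpose, hXc, hUc, hCc, hDc]
  have hsum : (0 : ℂ) ≤ ((fromRows X U)ᵀ * fromBlocks 0 Cᵀ C (D + Dᵀ) * fromRows X U).trace := by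
    rw [htr]
    refine Finset.sum_nonneg fun j _ => ?_
    set x := (Xc * Q).col j with hx
    set u := (Uc * Q).col j with hu
    have hYQ : Yc * Q = A.map Complex.ofReal * (Xc * Q) + B.map Complex.ofReal * (Uc * Q) := by
      rw [hYc, hY, map_ofReal_add, map_ofReal_mul, map_ofReal_mul, Matrix.add_mul,
        Matrix.mul_assoc, Matrix.mul_assoc]
    set y := A.map Complex.ofReal *ᵥ x + B.map Complex.ofReal *ᵥ u with hy
    have hxy : (1 + d j) • y = (d j - 1) • x := by
      ext i
      have h1 := congrFun (congrFun hdiag i) j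
      rw [Matrix.mul_diagonal, Matrix.add_mul, Matrix.sub_mul] at h1
      have h2 : (Yc * Q) i j = y i := by rw [hYQ]; rfl
      have h3 : (Xc * Q) i j = x i := rfl
      simp only [Matrix.add_apply, Matrix.sub_apply, h2, h3] at h1
      simp only [Pi.smul_apply, smul_eq_mul]
      linear_combination h1
    -- for `d j ≠ -1` the frequency is `s = (d j - 1) / (d j + 1)`; `d j = -1` is `s = ∞`
    by_cases hd1 : 1 + d j = 0
    · have hd2 : d j = -1 := by linear_combination hd1
      have hx0 : x = 0 := by
        rw [hd1, zero_smul, hd2] at hxy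
        exact (smul_eq_zero.1 hxy.symm).resolve_left (by norm_num)
      rw [hx0]
      simpa using hD.dotProduct_mulVec_nonneg u
    · have hre : ((d j - 1) / (1 + d j)).re = 0 := by
        have h1 : (d j).re * (d j).re + (d j).im * (d j).im = 1 := by
          rw [← Complex.normSq_apply, Complex.normSq_eq_norm_sq, hd]; norm_num
        rw [Complex.div_re]
        simp only [Complex.sub_re, Complex.add_re, Complex.sub_im, Complex.add_im,
          Complex.one_re, Complex.one_im]
        rw [← add_div]
        have : ((d j).re - 1) * (1 + (d j).re) + ((d j).im - 0) * (0 + (d j).im) = 0 := by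
          linear_combination h1
        rw [this, zero_div]
      obtain ⟨hu1, hu2⟩ := hfreq _ hre
      refine kyp_form_nonneg hu1 hu2 ?_
      rw [← hy, div_eq_inv_mul, mul_smul, ← hxy, smul_smul, inv_mul_cancel₀ hd1, one_smul]
  exact_mod_cast hsum

/-! ### Lyapunov inequalities -/

section Lyapunov

attribute [local instance] Matrix.linftyOpNormedRing Matrix.linftyOpNormedAlgebra

/-- Gelfand's formula: the powers of a matrix with spectrum in the open unit disc tend to `0`. -/
theorem tendsto_pow_of_spectrum {κ : Type*} [Fintype κ] [DecidableEq κ] (T : Matrix κ κ ℂ)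
    (hT : ∀ z ∈ spectrum ℂ T, ‖z‖ < 1) :
    Filter.Tendsto (fun k : ℕ => T ^ k) Filter.atTop (nhds 0) := by
  rcases isEmpty_or_nonempty κ with hκ | hκ
  · simp only [Subsingleton.elim _ (0 : Matrix κ κ ℂ)]
    exact tendsto_const_nhds
  have : CompleteSpace (Matrix κ κ ℂ) := FiniteDimensional.complete ℂ _
  have hr : spectralRadius ℂ T < 1 := by
    have := spectrum.spectralRadius_lt_of_forall_lt T (r := 1) fun z hz => by
      simpa [← NNReal.coe_lt_coe] using hT z hz
    simpa using this
  obtain ⟨r, hr1, hr2⟩ := ENNReal.lt_iff_exists_nnreal_btwn.1 hr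
  have hr2' : r < 1 := by exact_mod_cast hr2
  have hg := (spectrum.pow_nnnorm_pow_one_div_tendsto_nhds_spectralRadius T).eventually_lt_const hr1
  have hpow : Filter.Tendsto (fun k : ℕ => (r : ℝ) ^ k) Filter.atTop (nhds 0) :=
    tendsto_pow_atTop_nhds_zero_of_lt_one r.2 (by exact_mod_cast hr2')
  refine squeeze_zero_norm' ?_ hpow
  filter_upwards [hg, Filter.eventually_gt_atTop 0] with k hk hk0
  have hk0' : (0 : ℝ) < k := by exact_mod_cast hk0
  rw [one_div, ENNReal.rpow_inv_lt_iff hk0', ENNReal.rpow_natCast] at hk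
  have : ‖T ^ k‖₊ < r ^ k := by exact_mod_cast hk
  exact_mod_cast this.le

end Lyapunov

/-- If `A` is stable and `PA + AᵀP ⪯ 0`, then `P ⪰ 0`. For the Cayley transform
`T = (1 + A)(1 - A)⁻¹`, the inequality becomes `P ⪰ TᵀPT`; iterating gives `P ⪰ (Tᵏ)ᵀPTᵏ → 0`. -/
theorem posSemidef_of_lyapunov {m : ℕ} {A P : Matrix (Fin m) (Fin m) ℝ}
    (hA : ∀ s : ℂ, 0 ≤ s.re →
      IsUnit (s • (1 : Matrix (Fin m) (Fin m) ℂ) - A.map Complex.ofReal).det)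
    (h : (-(P * A + Aᵀ * P)).PosSemidef) : P.PosSemidef := by
  have hu : IsUnit (1 - A).det := by
    have h1 := hA 1 (by simp)
    rw [one_smul, ← map_ofReal_one, ← map_ofReal_sub] at h1
    have h2 : ((1 - A).map Complex.ofReal).det = (((1 - A).det : ℝ) : ℂ) :=
      (Complex.ofRealHom.map_det (1 - A)).symm
    rw [h2, isUnit_iff_ne_zero] at h1
    rw [isUnit_iff_ne_zero]
    exact_mod_cast h1
  set R := (1 - A)⁻¹ with hR
  have hR1 : (1 - A) * R = 1 := Matrix.mul_nonsing_inv _ hu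
  set T := (1 + A) * R with hT
  have hstep : (P - Tᵀ * P * T).PosSemidef := by
    have h1 : P - Tᵀ * P * T = Rᴴ * ((2 : ℝ) • (-(P * A + Aᵀ * P))) * R := by
      have h2 : P = Rᵀ * ((1 - A)ᵀ * P * (1 - A)) * R := by
        calc P = ((1 - A) * R)ᵀ * P * ((1 - A) * R) := by rw [hR1]; simp
          _ = _ := by simp only [Matrix.transpose_mul, Matrix.mul_assoc]
      have h3 : (2 : ℝ) • (-(P * A + Aᵀ * P))
          = (1 - A)ᵀ * P * (1 - A) - (1 + A)ᵀ * P * (1 + A) := by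
        simp only [Matrix.transpose_sub, Matrix.transpose_add, Matrix.transpose_one,
          Matrix.sub_mul, Matrix.mul_sub, Matrix.add_mul, Matrix.mul_add, Matrix.one_mul,
          Matrix.mul_one]
        module
      rw [h3, Matrix.mul_sub, Matrix.sub_mul, Matrix.conjTranspose_eq_transpose_of_trivial, ← h2,
        hT]
      simp only [Matrix.transpose_mul, Matrix.mul_assoc]
    rw [h1]
    exact (h.smul (by norm_num)).conjTranspose_mul_mul_same R
  have hk : ∀ k : ℕ, (P - (T ^ k)ᵀ * P * T ^ k).PosSemidef := by
    intro k
    induction k with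
    | zero => simpa using Matrix.PosSemidef.zero
    | succ k ih =>
      have h1 := ih.add (hstep.conjTranspose_mul_mul_same (T ^ k))
      convert h1 using 1
      rw [Matrix.conjTranspose_eq_transpose_of_trivial, pow_succ']
      simp only [Matrix.transpose_mul, Matrix.mul_sub, Matrix.sub_mul, Matrix.mul_assoc]
      abel
  have hlimc : Filter.Tendsto (fun k : ℕ => (T.map Complex.ofReal) ^ k) Filter.atTop (nhds 0) := by
    refine tendsto_pow_of_spectrum _ fun z hz => ?_
    by_contra! hz1
    rw [spectrum.mem_iff, Matrix.isUnit_iff_isUnit_det] at hz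
    apply hz
    set Ac := A.map Complex.ofReal with hAc
    have hRc : (1 - Ac) * R.map Complex.ofReal = 1 := by
      rw [hAc, ← map_ofReal_one, ← map_ofReal_sub, ← map_ofReal_mul, hR1]
    have h1 : algebraMap ℂ (Matrix (Fin m) (Fin m) ℂ) z - T.map Complex.ofReal
        = ((z - 1) • 1 - (z + 1) • Ac) * R.map Complex.ofReal := by
      have h2 : algebraMap ℂ (Matrix (Fin m) (Fin m) ℂ) z
          = z • ((1 - Ac) * R.map Complex.ofReal) := by
        rw [hRc, Algebra.algebraMap_eq_smul_one]
      rw [h2, hT, map_ofReal_mul, map_ofReal_add, map_ofReal_one, ← Matrix.smul_mul,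
        ← Matrix.sub_mul, ← hAc]
      congr 1
      module
    rw [h1, Matrix.det_mul]
    have hRu : IsUnit (R.map Complex.ofReal).det := by
      have := congrArg Matrix.det hRc
      rw [Matrix.det_mul, Matrix.det_one] at this
      exact IsUnit.of_mul_eq_one _ (by rw [mul_comm]; exact this)
    refine IsUnit.mul ?_ hRu
    -- `z` is an eigenvalue of `T` only if `(z - 1) / (z + 1)`, of nonnegative real part, is one of `A`
    by_cases hz2 : z + 1 = 0
    · have : z - 1 = -2 := by linear_combination hz2
      rw [hz2, this, zero_smul, sub_zero, Matrix.det_smul, Matrix.det_one, mul_one]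
      exact (isUnit_iff_ne_zero.2 (by norm_num)).pow _
    · have h3 : (z - 1) • (1 : Matrix (Fin m) (Fin m) ℂ) - (z + 1) • Ac
          = (z + 1) • (((z - 1) / (z + 1)) • 1 - Ac) := by
        rw [smul_sub, smul_smul, mul_div_cancel₀ _ hz2]
      rw [h3, Matrix.det_smul]
      refine ((isUnit_iff_ne_zero.2 hz2).pow _).mul (hA _ ?_)
      rw [Complex.div_re, ← add_div]
      refine div_nonneg ?_ (Complex.normSq_nonneg _)
      have h4 : 1 ≤ z.re * z.re + z.im * z.im := by
        rw [← Complex.normSq_apply, Complex.normSq_eq_norm_sq]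
        nlinarith
      simp only [Complex.sub_re, Complex.add_re, Complex.sub_im, Complex.add_im,
        Complex.one_re, Complex.one_im]
      nlinarith
  have hlim : Filter.Tendsto (fun k : ℕ => T ^ k) Filter.atTop (nhds 0) := by
    have hc : Continuous fun M : Matrix (Fin m) (Fin m) ℂ => M.map Complex.re :=
      continuous_id.matrix_map Complex.continuous_re
    have h1 := (hc.tendsto 0).comp hlimc
    have h2 : (0 : Matrix (Fin m) (Fin m) ℂ).map Complex.re = 0 := by ext; simp
    rw [h2] at h1
    refine h1.congr fun k => ?_
    have h3 : (T.map Complex.ofReal) ^ k = (T ^ k).map Complex.ofReal :=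
      (map_pow (Complex.ofRealHom.mapMatrix) T k).symm
    ext i j
    simp [h3]
  have hc : Continuous fun M : Matrix (Fin m) (Fin m) ℝ => P - Mᵀ * P * M := by fun_prop
  have hlim2 := (hc.tendsto 0).comp hlim
  have := isClosed_setOf_posSemidef.mem_of_tendsto hlim2 (Filter.Eventually.of_forall hk)
  simpa using this

/-- Under observability a semidefinite solution of the Kalman–Yakubovich–Popov equations is
definite, because `ker P` is `A`-invariant and contained in `ker C`. -/
theorem posDef_of_observable {m n : ℕ} {κ : Type*} [Fintype κ] {A P : Matrix (Fin m) (Fin m) ℝ}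
    {B : Matrix (Fin m) (Fin n) ℝ} {C : Matrix (Fin n) (Fin m) ℝ}
    {L : Matrix κ (Fin m) ℝ} {W : Matrix κ (Fin n) ℝ}
    (hobs : IsReachable Aᵀ Cᵀ) (hP : P.PosSemidef)
    (h1 : P * A + Aᵀ * P = -(Lᵀ * L)) (h2 : C - Bᵀ * P = Wᵀ * L) : P.PosDef := by
  refine Matrix.PosDef.of_dotProduct_mulVec_pos hP.1 fun x hx => ?_
  refine lt_of_le_of_ne (hP.dotProduct_mulVec_nonneg x) fun h0 => hx ?_
  have hPx : P *ᵥ x = 0 := (hP.dotProduct_mulVec_zero_iff x).1 h0.symm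
  have hPt : Pᵀ = P := hP.1
  -- `ker P` is invariant under `A`, and contained in the kernels of `L` and `C`
  have hker : ∀ y, P *ᵥ y = 0 → P *ᵥ (A *ᵥ y) = 0 ∧ C *ᵥ y = 0 := by
    intro y hy
    have hy' : y ᵥ* P = 0 := by rw [← hPt, Matrix.vecMul_transpose, hy]
    have h3 := congrArg (fun M => y ⬝ᵥ (M *ᵥ y)) h1
    have hL : L *ᵥ y = 0 := by
      have h4 : (L *ᵥ y) ⬝ᵥ (L *ᵥ y) = 0 := by
        simp only [Matrix.add_mulVec, Matrix.neg_mulVec, dotProduct_neg,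
          ← Matrix.mulVec_mulVec, hy, Matrix.mulVec_zero, add_zero] at h3
        rw [Matrix.dotProduct_mulVec, hy', zero_dotProduct, Matrix.dotProduct_mulVec,
          Matrix.vecMul_transpose] at h3
        linarith
      exact dotProduct_self_eq_zero.1 h4
    constructor
    · have h5 := congrArg (fun M => M *ᵥ y) h1
      simpa only [Matrix.add_mulVec, Matrix.neg_mulVec, ← Matrix.mulVec_mulVec, hy, hL,
        Matrix.mulVec_zero, add_zero, neg_zero] using h5
    · have h5 := congrArg (fun M => M *ᵥ y) h2
      simpa only [Matrix.sub_mulVec, ← Matrix.mulVec_mulVec, hy, hL,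
        Matrix.mulVec_zero, sub_zero] using h5
  have hall : ∀ k : ℕ, P *ᵥ ((A ^ k) *ᵥ x) = 0 := by
    intro k
    induction k with
    | zero => simpa using hPx
    | succ k ih => rw [pow_succ', ← Matrix.mulVec_mulVec]; exact (hker _ ih).1
  have hzero : Matrix.replicateRow (Fin m) x = 0 := by
    refine hobs _ fun k => ?_
    rw [← Matrix.transpose_pow, ← Matrix.transpose_mul]
    ext i j
    have h3 := congrFun (hker _ (hall k)).2 j
    rw [Matrix.mulVec_mulVec] at h3
    rw [Matrix.zero_apply, ← h3.trans (Pi.zero_apply j), Matrix.mul_apply]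
    exact Finset.sum_congr rfl fun l _ => mul_comm _ _
  ext i
  exact congrFun (congrFun hzero i) i

/-! ### Positive realness -/

/-- Positive realness at infinity: `D + Dᵀ ⪰ 0`, as the limit of `G(s) + G(s)ᴴ` for real
`s = 1/t → ∞`. -/
theorem feedthrough_posSemidef {m n : ℕ} {A : Matrix (Fin m) (Fin m) ℝ}
    {B : Matrix (Fin m) (Fin n) ℝ} {C : Matrix (Fin n) (Fin m) ℝ}
    {D : Matrix (Fin n) (Fin n) ℝ}
    (h : IsPR A B C D) : (D.map Complex.ofReal + (D.map Complex.ofReal)ᴴ).PosSemidef := by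
  set Ac := A.map Complex.ofReal with hAc
  -- `g t = G(1/t)`, written so as to be continuous at `t = 0`
  set g : ℝ → Matrix (Fin n) (Fin n) ℂ := fun t =>
    C.map Complex.ofReal * ((t : ℂ) • (1 - (t : ℂ) • Ac)⁻¹) * B.map Complex.ofReal
      + D.map Complex.ofReal with hg
  have hg0 : g 0 = D.map Complex.ofReal := by simp [hg]
  have hgt : ∀ t : ℝ, 0 < t → g t = transferFn A B C D ((t⁻¹ : ℝ) : ℂ) := by
    intro t ht
    have htc : (t : ℂ) ≠ 0 := by exact_mod_cast ht.ne'
    have hdet := (h ((t⁻¹ : ℝ) : ℂ) (by simpa using ht)).1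
    have h1 : (t : ℂ) • (1 - (t : ℂ) • Ac)⁻¹ = (((t⁻¹ : ℝ) : ℂ) • 1 - Ac)⁻¹ := by
      symm
      apply Matrix.inv_eq_right_inv
      have h2 : (1 - (t : ℂ) • Ac) = (t : ℂ) • ((((t⁻¹ : ℝ) : ℂ) • 1 - Ac)) := by
        rw [smul_sub, smul_smul]
        push_cast
        rw [mul_inv_cancel₀ htc, one_smul]
      have hdet2 : IsUnit (1 - (t : ℂ) • Ac).det := by
        rw [h2, Matrix.det_smul]
        exact ((isUnit_iff_ne_zero.2 htc).pow _).mul hdet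
      rw [Matrix.mul_smul, ← Matrix.smul_mul, ← h2, Matrix.mul_nonsing_inv _ hdet2]
    simp only [hg, transferFn, h1]
    rfl
  have hcont : ContinuousAt g 0 := by
    have hinv : ContinuousAt (fun t : ℝ => (1 - (t : ℂ) • Ac)⁻¹) 0 := by
      simp only [Matrix.inv_def, Ring.inverse_eq_inv']
      have hc : Continuous fun t : ℝ => (1 - (t : ℂ) • Ac) := by fun_prop
      refine ContinuousAt.smul (ContinuousAt.inv₀ hc.matrix_det.continuousAt (by simp)) ?_
      · exact hc.matrix_adjugate.continuousAt
    have h1 : ContinuousAt (fun t : ℝ => (t : ℂ) • (1 - (t : ℂ) • Ac)⁻¹) 0 :=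
      (Complex.continuous_ofReal.continuousAt).smul hinv
    have h2 : Continuous fun M : Matrix (Fin m) (Fin m) ℂ =>
      C.map Complex.ofReal * M * B.map Complex.ofReal + D.map Complex.ofReal := by fun_prop
    exact h2.continuousAt.comp h1
  rw [Matrix.posSemidef_iff_dotProduct_mulVec]
  refine ⟨by ext; simp [add_comm], fun x => ?_⟩
  have hc2 : Continuous fun M : Matrix (Fin n) (Fin n) ℂ => star x ⬝ᵥ ((M + Mᴴ) *ᵥ x) := by
    fun_prop
  have hlim : Filter.Tendsto (fun t => star x ⬝ᵥ ((g t + (g t)ᴴ) *ᵥ x)) (nhdsWithin 0 (Set.Ioi 0))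
      (nhds (star x ⬝ᵥ ((D.map Complex.ofReal + (D.map Complex.ofReal)ᴴ) *ᵥ x))) := by
    have h3 := (hc2.tendsto (g 0)).comp hcont.tendsto
    rw [hg0] at h3
    exact h3.mono_left nhdsWithin_le_nhds
  refine ge_of_tendsto hlim ?_
  filter_upwards [self_mem_nhdsWithin] with t ht
  have h4 := (h ((t⁻¹ : ℝ) : ℂ) (by simpa using ht)).2
  rw [transferFn_conj_transpose, ← hgt t ht] at h4
  exact h4.dotProduct_mulVec_nonneg x

/-- Strict positive realness extends the frequency condition to the closed half plane: `G(s)` is the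
shifted transfer matrix evaluated at `s + δ`. -/
theorem IsPR.shift {m n : ℕ} {A : Matrix (Fin m) (Fin m) ℝ}
    {B : Matrix (Fin m) (Fin n) ℝ} {C : Matrix (Fin n) (Fin m) ℝ}
    {D : Matrix (Fin n) (Fin n) ℝ} {δ : ℝ} (hδ : 0 < δ)
    (h : IsPR (A + δ • (1 : Matrix (Fin m) (Fin m) ℝ)) B C D) (s : ℂ) (hs : 0 ≤ s.re) :
    IsUnit (s • (1 : Matrix (Fin m) (Fin m) ℂ) - A.map Complex.ofReal).det ∧
    (transferFn A B C D s + (transferFn A B C D ((starRingEnd ℂ) s))ᵀ).PosSemidef := by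
  have h1 : (s + δ) • (1 : Matrix (Fin m) (Fin m) ℂ)
      - (A + δ • (1 : Matrix (Fin m) (Fin m) ℝ)).map Complex.ofReal
      = s • (1 : Matrix (Fin m) (Fin m) ℂ) - A.map Complex.ofReal := by
    rw [map_ofReal_add, map_ofReal_smul, map_ofReal_one]; module
  have h2 := h (s + δ) (by simp; linarith)
  rw [transferFn_conj_transpose] at h2 ⊢
  simp only [transferFn] at h2 ⊢
  rwa [h1] at h2

/-- Sufficiency in the positive real lemma, from the completed square
`G(s) + G(s)ᴴ = (LR + W)ᴴ(LR + W) + 2 Re(s) RᴴPR` with `R = (sI - A)⁻¹B`. -/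
theorem isPR_of_kyp {m n : ℕ} {κ : Type*} [Fintype κ] {A P : Matrix (Fin m) (Fin m) ℝ}
    {B : Matrix (Fin m) (Fin n) ℝ} {C : Matrix (Fin n) (Fin m) ℝ} {D : Matrix (Fin n) (Fin n) ℝ}
    {L : Matrix κ (Fin m) ℝ} {W : Matrix κ (Fin n) ℝ} (hP : P.PosDef)
    (h1 : P * A + Aᵀ * P = -(Lᵀ * L)) (h2 : C - Bᵀ * P = Wᵀ * L) (h3 : D + Dᵀ = Wᵀ * W) :
    IsPR A B C D := by
  intro s hs
  obtain ⟨N, hN⟩ := hP.posSemidef.exists_eq_transpose_mul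
  have hNdet : N.det ≠ 0 := by
    intro h0
    have := hP.det_pos
    rw [hN, Matrix.det_mul, h0, mul_zero] at this
    exact lt_irrefl _ this
  have hPt : Pᵀ = P := hP.1
  have hs2 : (0 : ℂ) < s + star s := by
    rw [Complex.star_def, Complex.add_conj]
    exact_mod_cast (by linarith : 0 < 2 * s.re)
  set Ac := A.map Complex.ofReal with hAc
  set Bc := B.map Complex.ofReal with hBc
  set Cc := C.map Complex.ofReal with hCc
  set Dc := D.map Complex.ofReal with hDc
  set Lc := L.map Complex.ofReal with hLc
  set Wc := W.map Complex.ofReal with hWc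
  set Pc := P.map Complex.ofReal with hPc
  set Nc := N.map Complex.ofReal with hNc
  have hPN : Pc = Ncᴴ * Nc := by
    rw [hPc, hN, map_ofReal_mul, map_ofReal_transpose]
  have hPcH : Pcᴴ = Pc := by rw [hPN]; simp
  have hPpsd : Pc.PosSemidef := by
    rw [hPN]; exact Matrix.posSemidef_conjTranspose_mul_self Nc
  have hNcdet : IsUnit Nc.det := by
    have : Nc.det = ((N.det : ℝ) : ℂ) := (Complex.ofRealHom.map_det N).symm
    rw [this, isUnit_iff_ne_zero]
    exact_mod_cast hNdet
  have h1c : Pc * Ac + Acᴴ * Pc = -(Lcᴴ * Lc) := by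
    have := congrArg (fun M => M.map Complex.ofReal) h1
    simp only [map_ofReal_add, map_ofReal_mul, map_ofReal_transpose,
      ← zero_sub (Lᵀ * L), map_ofReal_sub, map_ofReal_zero] at this
    rw [this, zero_sub]
  have h2c : Cc = Wcᴴ * Lc + Bcᴴ * Pc := by
    have := congrArg (fun M => M.map Complex.ofReal) h2
    simp only [map_ofReal_sub, map_ofReal_mul, map_ofReal_transpose] at this
    rw [← this]; simp [hCc, hBc, hPc]
  have h3c : Dc + Dcᴴ = Wcᴴ * Wc := by
    have := congrArg (fun M => M.map Complex.ofReal) h3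
    simpa only [map_ofReal_add, map_ofReal_mul, map_ofReal_transpose] using this
  set S := s • (1 : Matrix (Fin m) (Fin m) ℂ) - Ac with hS
  have hLyap : Pc * S + Sᴴ * Pc = (s + star s) • Pc + Lcᴴ * Lc := by
    have : Pc * S + Sᴴ * Pc = (s + star s) • Pc - (Pc * Ac + Acᴴ * Pc) := by
      simp only [hS, Matrix.conjTranspose_sub, Matrix.conjTranspose_smul,
        Matrix.conjTranspose_one, Matrix.mul_sub, Matrix.sub_mul, Matrix.mul_smul,
        Matrix.smul_mul, Matrix.mul_one, Matrix.one_mul]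
      module
    rw [this, h1c, sub_neg_eq_add]
  -- a kernel vector `v` of `sI - A` has `2 Re(s) vᴴPv + ‖Lv‖² = 0`
  have hSdet : IsUnit S.det := by
    rw [isUnit_iff_ne_zero]
    intro h0
    obtain ⟨v, hv, hSv⟩ := Matrix.exists_mulVec_eq_zero_iff.2 h0
    have h4 := congrArg (fun M => star v ⬝ᵥ (M *ᵥ v)) hLyap
    have h5 : star v ᵥ* Sᴴ = 0 := by rw [← Matrix.star_mulVec, hSv, star_zero]
    simp only [Matrix.add_mulVec, dotProduct_add, ← Matrix.mulVec_mulVec, hSv, Matrix.mulVec_zero,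
      zero_add, Matrix.smul_mulVec, dotProduct_smul, smul_eq_mul] at h4
    rw [Matrix.dotProduct_mulVec _ Sᴴ, h5, zero_dotProduct] at h4
    have h6 : 0 ≤ star v ⬝ᵥ (Pc *ᵥ v) := hPpsd.dotProduct_mulVec_nonneg v
    have h7 : 0 ≤ star v ⬝ᵥ (Lcᴴ *ᵥ (Lc *ᵥ v)) := by
      rw [Matrix.mulVec_mulVec]
      exact (Matrix.posSemidef_conjTranspose_mul_self Lc).dotProduct_mulVec_nonneg v
    have h8 : star v ⬝ᵥ (Pc *ᵥ v) = 0 := by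
      have h9 := (add_eq_zero_iff_of_nonneg (mul_nonneg hs2.le h6) h7).1 h4.symm
      exact (mul_eq_zero.1 h9.1).resolve_left hs2.ne'
    have h10 : Nc *ᵥ v = 0 := by
      rw [hPN, ← Matrix.mulVec_mulVec, Matrix.dotProduct_mulVec, ← Matrix.star_mulVec] at h8
      exact dotProduct_star_self_eq_zero.1 h8
    exact hv (Matrix.eq_zero_of_mulVec_eq_zero hNcdet.ne_zero h10)
  refine ⟨hSdet, ?_⟩
  rw [transferFn_conj_transpose]
  set R := S⁻¹ * Bc with hR
  have hSR : S * R = Bc := by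
    rw [hR, ← Matrix.mul_assoc, Matrix.mul_nonsing_inv _ hSdet, Matrix.one_mul]
  have hG : transferFn A B C D s = Cc * R + Dc := by
    rw [hR, ← Matrix.mul_assoc]; rfl
  have hsum : transferFn A B C D s + (transferFn A B C D s)ᴴ
      = (Lc * R + Wc)ᴴ * (Lc * R + Wc) + (s + star s) • (Rᴴ * Pc * R) := by
    have h4 : transferFn A B C D s + (transferFn A B C D s)ᴴ
        = Cc * R + Rᴴ * Ccᴴ + (Dc + Dcᴴ) := by
      rw [hG, Matrix.conjTranspose_add, Matrix.conjTranspose_mul]; abel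
    have h5 : (s + star s) • (Rᴴ * Pc * R) + Rᴴ * (Lcᴴ * Lc) * R
        = Rᴴ * Pc * Bc + Bcᴴ * Pc * R := by
      have h6 := congrArg (fun M => Rᴴ * M * R) hLyap
      rw [← hSR]
      simp only [Matrix.conjTranspose_mul, Matrix.mul_add, Matrix.add_mul, Matrix.mul_smul,
        Matrix.smul_mul, Matrix.mul_assoc] at h6 ⊢
      exact h6.symm
    have h7 : (Lc * R + Wc)ᴴ * (Lc * R + Wc) + (s + star s) • (Rᴴ * Pc * R)
        = ((s + star s) • (Rᴴ * Pc * R) + Rᴴ * (Lcᴴ * Lc) * R)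
          + Rᴴ * Lcᴴ * Wc + Wcᴴ * Lc * R + Wcᴴ * Wc := by
      simp only [Matrix.conjTranspose_add, Matrix.conjTranspose_mul, Matrix.mul_add,
        Matrix.add_mul, Matrix.mul_assoc]
      abel
    rw [h4, h7, h5, h3c, h2c]
    simp only [Matrix.conjTranspose_add, Matrix.conjTranspose_mul, Matrix.mul_add,
        Matrix.add_mul, Matrix.mul_assoc, Matrix.conjTranspose_conjTranspose, hPcH]
    abel
  rw [hsum]
  exact (Matrix.posSemidef_conjTranspose_mul_self _).add
    ((hPpsd.conjTranspose_mul_mul_same R).smul hs2.le)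

/-! ### The Lefschetz–Kalman–Yakubovich lemma -/

/-- Lefschetz–Kalman–Yakubovich: if `(A,B)` is controllable and
`(A,C)` is observable, then `G(s) = C(sI − A)⁻¹B + D` is strictly positive real
iff there exist `P = Pᵀ ≻ 0`, matrices `L₀, W₀` and `ε > 0` with
`PA + AᵀP = −L₀ᵀL₀ − εP`, `C − BᵀP = W₀ᵀL₀` and `D + Dᵀ = W₀ᵀW₀`. -/
theorem lefschetz_kalman_yakubovich {m n : ℕ}
    (A : Matrix (Fin m) (Fin m) ℝ) (B : Matrix (Fin m) (Fin n) ℝ)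
    (C : Matrix (Fin n) (Fin m) ℝ) (D : Matrix (Fin n) (Fin n) ℝ)
    (hctrb : Controllable A B) (hobs : Observable A C) :
    IsSPR A B C D ↔
      ∃ (P : Matrix (Fin m) (Fin m) ℝ), P.PosDef ∧
        ∃ (p : ℕ) (L₀ : Matrix (Fin p) (Fin m) ℝ) (W₀ : Matrix (Fin p) (Fin n) ℝ)
          (ε : ℝ), 0 < ε ∧
            P * A + Aᵀ * P = -(L₀ᵀ * L₀) - ε • P ∧
            C - Bᵀ * P = W₀ᵀ * L₀ ∧
            D + Dᵀ = W₀ᵀ * W₀ := by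
  -- the term `εP` is absorbed by passing to `A + (ε/2)I`
  have hshift : ∀ (P : Matrix (Fin m) (Fin m) ℝ) (ε : ℝ),
      P * (A + (ε / 2) • (1 : Matrix (Fin m) (Fin m) ℝ))
        + (A + (ε / 2) • (1 : Matrix (Fin m) (Fin m) ℝ))ᵀ * P = P * A + Aᵀ * P + ε • P := by
    intro P ε
    simp only [Matrix.transpose_add, Matrix.transpose_smul, Matrix.transpose_one, Matrix.mul_add,
      Matrix.add_mul, Matrix.mul_smul, Matrix.smul_mul, Matrix.mul_one, Matrix.one_mul]
    module
  constructor
  · rintro ⟨ε, hε, hPR⟩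
    have hD := feedthrough_posSemidef hPR
    have hε2 : A + ε • (1 : Matrix (Fin m) (Fin m) ℝ)
        = (A + (ε / 2) • (1 : Matrix (Fin m) (Fin m) ℝ)) + (ε / 2) • 1 := by module
    -- half of the shift gives the factor `ε` in the equation, the other half the closed half plane
    rw [hε2] at hPR
    have hcl := hPR.shift (half_pos hε)
    have hc := hctrb.isReachable.add_smul_one (ε / 2)
    have ho : IsReachable (A + (ε / 2) • (1 : Matrix (Fin m) (Fin m) ℝ))ᵀ Cᵀ := by
      have := (Controllable.isReachable hobs).add_smul_one (ε / 2)
      simpa using this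
    obtain ⟨P, hPt, hpsd⟩ := exists_kyp_certificate hc (fromBlocks 0 Cᵀ C (D + Dᵀ))
      (by simp [Matrix.fromBlocks_transpose, add_comm])
      (kyp_dual (fun s hs => hcl s hs.ge) hD)
    obtain ⟨N, hN⟩ := hpsd.exists_eq_transpose_mul
    obtain ⟨L, W, rfl⟩ : ∃ L W, N = fromCols L W :=
      ⟨N.toCols₁, N.toCols₂, (fromCols_toCols N).symm⟩
    rw [kypMap_apply, transpose_fromCols, fromRows_mul_fromCols, sub_eq_add_neg,
      Matrix.fromBlocks_neg, Matrix.fromBlocks_add, fromBlocks_inj, zero_add, neg_zero, add_zero] at hN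
    obtain ⟨h11, -, h21, h22⟩ := hN
    rw [← sub_eq_add_neg] at h21
    have h11' := neg_eq_iff_eq_neg.1 h11
    have hP0 : P.PosSemidef := posSemidef_of_lyapunov (fun s hs => (hcl s hs).1) (by
      rw [h11]; exact Matrix.posSemidef_conjTranspose_mul_self L)
    refine ⟨P, posDef_of_observable ho hP0 h11' h21, m + n,
      L.submatrix finSumFinEquiv.symm id, W.submatrix finSumFinEquiv.symm id, ε, hε, ?_, ?_, ?_⟩
    · rw [Matrix.transpose_submatrix, Matrix.submatrix_mul_equiv, Matrix.submatrix_id_id,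
        ← h11', hshift]
      abel
    · rw [Matrix.transpose_submatrix, Matrix.submatrix_mul_equiv, Matrix.submatrix_id_id, h21]
    · rw [Matrix.transpose_submatrix, Matrix.submatrix_mul_equiv, Matrix.submatrix_id_id, h22]
  · rintro ⟨P, hP, p, L, W, ε, hε, h1, h2, h3⟩
    refine ⟨ε / 2, half_pos hε, isPR_of_kyp hP ?_ h2 h3⟩
    rw [hshift, h1]
    abel
end

section
/- Let J, R, Q ∈ M_m(ℝ) with J = −Jᵀ and R, Q symmetric positive definite. Then the matrix (J − R)Q is Hurwitz, i.e., every eigenvalue λ ∈ ℂ of (J − R)Q satisfies Re(λ) < 0. -/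
/-!
Let `v ≠ 0` satisfy `(J - R) Q v = z v` and put `w = Q v`. Since `Q` is Hermitian over `ℂ`, pairing
with `w` gives `w* J w - w* R w = z (v* Q v)`. The complexifications of `Q` and `R` are still
positive definite (`posDef_map_ofReal`), so `v* Q v > 0`, hence `w ≠ 0` and `w* R w > 0`, while
`w* J w` is purely imaginary. Taking real parts yields `Re z * (v* Q v) = -(w* R w) < 0`.
-/

open Matrix

/-- A real square matrix is Hurwitz if every eigenvalue `λ ∈ ℂ` of its
entrywise complexification satisfies `Re λ < 0`. -/
def IsHurwitz {ι : Type*} [Fintype ι] [DecidableEq ι] (A : Matrix ι ι ℝ) : Prop :=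
  ∀ z ∈ spectrum ℂ (A.map Complex.ofReal), z.re < 0

/-- Reduces both uses of the complex form to real quadratic forms: it is purely imaginary when `M` is
skew-symmetric and has positive real part at `v ≠ 0` when `M` is positive definite. -/
lemma re_star_dotProduct_map_mulVec {ι : Type*} [Fintype ι] (M : Matrix ι ι ℝ) (v : ι → ℂ) :
    (star v ⬝ᵥ (M.map Complex.ofReal *ᵥ v)).re =
      (fun i => (v i).re) ⬝ᵥ (M *ᵥ fun i => (v i).re) +
      (fun i => (v i).im) ⬝ᵥ (M *ᵥ fun i => (v i).im) := by
  simp [dotProduct, mulVec, Finset.sum_add_distrib]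

lemma dotProduct_mulVec_self_of_skew {ι : Type*} [Fintype ι] {J : Matrix ι ι ℝ}
    (hJ : J = -Jᵀ) (x : ι → ℝ) : x ⬝ᵥ (J *ᵥ x) = 0 := by
  have h : x ⬝ᵥ (J *ᵥ x) = -(x ⬝ᵥ (J *ᵥ x)) := by
    conv_lhs => rw [hJ, neg_mulVec, dotProduct_neg, mulVec_transpose, dotProduct_comm,
      ← dotProduct_mulVec]
  linarith

open scoped ComplexOrder in
lemma posDef_map_ofReal {ι : Type*} [Fintype ι] {S : Matrix ι ι ℝ} (hS : S.PosDef) :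
    (S.map Complex.ofReal).PosDef := by
  have hH : (S.map Complex.ofReal).IsHermitian :=
    hS.isHermitian.map _ fun x => (Complex.conj_ofReal x).symm
  refine .of_dotProduct_mulVec_pos hH fun v hv => ?_
  rw [Complex.pos_iff]
  refine ⟨?_, (hH.im_star_dotProduct_mulVec_self v).symm⟩
  rw [re_star_dotProduct_map_mulVec]
  have h0 : ∀ x : ι → ℝ, 0 ≤ x ⬝ᵥ (S *ᵥ x) := fun x => by
    simpa using hS.posSemidef.dotProduct_mulVec_nonneg x
  have h1 : ∀ x : ι → ℝ, x ≠ 0 → 0 < x ⬝ᵥ (S *ᵥ x) := fun x hx => by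
    simpa using hS.dotProduct_mulVec_pos hx
  by_cases hx : (fun i => (v i).re) = 0
  · refine add_pos_of_nonneg_of_pos (h0 _) (h1 _ fun hy => hv ?_)
    funext i
    exact Complex.ext (congrFun hx i) (congrFun hy i)
  · exact add_pos_of_pos_of_nonneg (h1 _ hx) (h0 _)

/-- if `J = −Jᵀ` and `R, Q` are symmetric positive definite, then
`(J − R)Q` is Hurwitz. -/
theorem dissipative_portHamiltonian_isHurwitz {m : ℕ}
    (J R Q : Matrix (Fin m) (Fin m) ℝ)
    (hJ : J = -Jᵀ) (hR : R.PosDef) (hQ : Q.PosDef) :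
    IsHurwitz ((J - R) * Q) := by
  open scoped ComplexOrder in
  · intro z hz
    rw [← spectrum_toLin', ← Module.End.hasEigenvalue_iff_mem_spectrum] at hz
    obtain ⟨v, hv⟩ := hz.exists_hasEigenvector
    have hv0 : v ≠ 0 := hv.2
    have hev : (((J - R) * Q).map Complex.ofReal) *ᵥ v = z • v := by
      simpa using hv.apply_eq_smul
    have hQc := posDef_map_ofReal hQ
    have hRc := posDef_map_ofReal hR
    set w := Q.map Complex.ofReal *ᵥ v with hw
    have hq : 0 < star v ⬝ᵥ w := hQc.dotProduct_mulVec_pos hv0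
    have hw0 : w ≠ 0 := fun h => by simp [h] at hq
    have hr := hRc.dotProduct_mulVec_pos hw0
    have hsym : star w ⬝ᵥ v = star v ⬝ᵥ w := by
      rw [hw, star_mulVec, hQc.isHermitian.eq, dotProduct_mulVec]
    have hmap : ((J - R) * Q).map Complex.ofReal =
        (J.map Complex.ofReal - R.map Complex.ofReal) * Q.map Complex.ofReal := by
      ext i j
      simp [mul_apply]
    rw [hmap, ← mulVec_mulVec, ← hw, sub_mulVec] at hev
    -- Pairing with `w = Q v` rather than `v` turns the left side into forms of `J` and `R` alone.
    have key := congrArg (fun u => (star w ⬝ᵥ u).re) hev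
    simp only [dotProduct_sub, dotProduct_smul, smul_eq_mul, hsym, Complex.sub_re,
      Complex.mul_re] at key
    rw [re_star_dotProduct_map_mulVec J, dotProduct_mulVec_self_of_skew hJ,
      dotProduct_mulVec_self_of_skew hJ] at key
    rw [Complex.pos_iff] at hq hr
    rw [← hq.2] at key
    -- `key` now reads `0 + 0 - re (w* R w) = re z * re (v* Q v) - im z * 0`.
    nlinarith [hq.1, hr.1]
end

section
/- Let A ∈ M_m(ℝ), B ∈ ℝ^{m×n}, C, K ∈ ℝ^{n×m}, let R_c ∈ M_m(ℝ) be symmetric, and let Q_c ∈ M_m(ℝ) be symmetric invertible satisfying the algebraic Riccati equation A_Kᵀ Q_c + Q_c A_K + 2 Q_c R_c Q_c + C_K = 0, where A_K = A − BK and C_K = −(KᵀC + CᵀK). Then R_c = −(1/2)[Q_c⁻¹ A_Kᵀ + A_K Q_c⁻¹ + Q_c⁻¹ C_K Q_c⁻¹], and with J_c = (1/2)[A_K Q_c⁻¹ − Q_c⁻¹ A_Kᵀ − Q_c⁻¹(KᵀC − CᵀK)Q_c⁻¹], B_c = Q_c⁻¹Kᵀ and L = B_c, the matching condition (J_c − R_c)Q_c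 = A − BK − LC holds. -/
open Matrix

/-! Conjugating the Riccati equation by `Qc⁻¹` gives the formula for `Rc`. It determines the
symmetric part of `AK * Qc⁻¹ - Qc⁻¹ * Kᵀ * C * Qc⁻¹` as `-Rc`, while `Jc` is by definition the
skew-symmetric part of the same matrix; so `Jc - Rc` equals that matrix, and multiplying by `Qc`
on the right gives the matching condition. -/

/-- if `Q_c` is symmetric invertible and solves the algebraic
Riccati equation `A_KᵀQ_c + Q_cA_K + 2Q_cR_cQ_c + C_K = 0` (with
`A_K = A − BK`, `C_K = −(KᵀC + CᵀK)`, `R_c` symmetric), then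
`R_c = −(1/2)[Q_c⁻¹A_Kᵀ + A_KQ_c⁻¹ + Q_c⁻¹C_KQ_c⁻¹]`, and with
`J_c = (1/2)[A_KQ_c⁻¹ − Q_c⁻¹A_Kᵀ − Q_c⁻¹(KᵀC − CᵀK)Q_c⁻¹]`,
`B_c = Q_c⁻¹Kᵀ`, `L = B_c`, the matching condition
`(J_c − R_c)Q_c = A − BK − LC` holds. -/
theorem riccati_implies_matching {m n : ℕ}
    (A : Matrix (Fin m) (Fin m) ℝ) (B : Matrix (Fin m) (Fin n) ℝ)
    (C K : Matrix (Fin n) (Fin m) ℝ)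
    (Rc Qc AK CK Jc : Matrix (Fin m) (Fin m) ℝ)
    (Bc L : Matrix (Fin m) (Fin n) ℝ)
    (hRc : Rc = Rcᵀ) (hQc : Qc = Qcᵀ) (hQcInv : IsUnit Qc.det)
    (hAK : AK = A - B * K) (hCK : CK = -(Kᵀ * C + Cᵀ * K))
    (hARE : AKᵀ * Qc + Qc * AK + (2 : ℝ) • (Qc * Rc * Qc) + CK = 0)
    (hJc : Jc = (1 / 2 : ℝ) •
      (AK * Qc⁻¹ - Qc⁻¹ * AKᵀ - Qc⁻¹ * (Kᵀ * C - Cᵀ * K) * Qc⁻¹))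
    (hBc : Bc = Qc⁻¹ * Kᵀ) (hL : L = Bc) :
    Rc = -((1 / 2 : ℝ) • (Qc⁻¹ * AKᵀ + AK * Qc⁻¹ + Qc⁻¹ * CK * Qc⁻¹)) ∧
      (Jc - Rc) * Qc = A - B * K - L * C := by
  have hPQ : Qc⁻¹ * Qc = 1 := nonsing_inv_mul Qc hQcInv
  have hQP : Qc * Qc⁻¹ = 1 := mul_nonsing_inv Qc hQcInv
  have hR : Rc = -((1 / 2 : ℝ) • (Qc⁻¹ * AKᵀ + AK * Qc⁻¹ + Qc⁻¹ * CK * Qc⁻¹)) := by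
    -- Conjugating the Riccati equation by `Qc⁻¹` isolates `Rc`.
    have h : Qc⁻¹ * (AKᵀ * Qc + Qc * AK + (2 : ℝ) • (Qc * Rc * Qc) + CK) * Qc⁻¹ =
        Qc⁻¹ * AKᵀ * (Qc * Qc⁻¹) + (Qc⁻¹ * Qc) * AK * Qc⁻¹
          + (2 : ℝ) • ((Qc⁻¹ * Qc) * Rc * (Qc * Qc⁻¹)) + Qc⁻¹ * CK * Qc⁻¹ := by
      simp only [Matrix.mul_add, Matrix.add_mul, Matrix.mul_smul, Matrix.smul_mul,
        Matrix.mul_assoc]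
    rw [hARE, hPQ, hQP] at h
    simp only [Matrix.mul_zero, Matrix.zero_mul, Matrix.mul_one, Matrix.one_mul] at h
    linear_combination (norm := module) (-1 / 2 : ℝ) • h
  refine ⟨hR, ?_⟩
  -- The `AKᵀ` and `Cᵀ * K` terms of `Jc` and `Rc` cancel.
  have hJR : Jc - Rc = AK * Qc⁻¹ - Qc⁻¹ * (Kᵀ * C) * Qc⁻¹ := by
    rw [hR, hJc, hCK]
    simp only [Matrix.mul_add, Matrix.add_mul, Matrix.mul_sub, Matrix.sub_mul,
      Matrix.mul_neg, Matrix.neg_mul]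
    module
  rw [hJR, Matrix.sub_mul, Matrix.mul_assoc AK, Matrix.mul_assoc _ Qc⁻¹ Qc, hPQ,
    Matrix.mul_one, Matrix.mul_one, hAK, hL, hBc, Matrix.mul_assoc Qc⁻¹]
end

section
/- Let A ∈ M_m(ℝ), B ∈ ℝ^{m×n}, C, K ∈ ℝ^{n×m}, let R_c ∈ M_m(ℝ) be symmetric positive definite, and let Q_c ∈ M_m(ℝ) be symmetric positive definite satisfying the algebraic Riccati equation A_Kᵀ Q_c + Q_c A_K + 2 Q_c R_c Q_c + C_K = 0, where A_K = A − BK and C_K = −(KᵀC + CᵀK). Define L = Q_c⁻¹Kᵀ. Then the matrix A_c = A − BK − LC satisfies the Lyapunov equation Q_c A_c + A_cᵀ Q_c = −2 Q_c R_c Q_c, and consequently A − BK − LC is Hurwitz. -/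
/-!
Multiplying `A_c = A_K - L C` by `Q_c` cancels the inverse in `L = Q_c⁻¹ Kᵀ`, so
`Q_c A_c = Q_c A_K - Kᵀ C`. Adding the transpose turns the Riccati equation into the Lyapunov
equation with right-hand side `-2 Q_c R_c Q_c`, which is negative definite because `Q_c` is
invertible. The Hurwitz property is then Lyapunov's theorem (`isHurwitz_of_lyapunov`): if
`A v = z v` with `v = x + i y`, then adding the quadratic forms of `P A + Aᵀ P = -W` at `x` and `y`
gives `2 Re(z) (xᵀ P x + yᵀ P y) = -(xᵀ W x + yᵀ W y) < 0`.
-/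

open Matrix

/-- A complex eigenvector of a real matrix, split into its real and imaginary parts. -/
lemma exists_re_im_of_mem_spectrum {ι : Type*} [Fintype ι] [DecidableEq ι]
    {A : Matrix ι ι ℝ} {z : ℂ} (hz : z ∈ spectrum ℂ (A.map Complex.ofReal)) :
    ∃ x y : ι → ℝ, (x ≠ 0 ∨ y ≠ 0) ∧
      A *ᵥ x = z.re • x - z.im • y ∧ A *ᵥ y = z.im • x + z.re • y := by
  rw [← Matrix.spectrum_toLin', ← Module.End.hasEigenvalue_iff_mem_spectrum] at hz
  obtain ⟨v, hv⟩ := hz.exists_hasEigenvector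
  have hAv : A.map Complex.ofReal *ᵥ v = z • v := by
    simpa using hv.apply_eq_smul
  refine ⟨fun i => (v i).re, fun i => (v i).im, ?_, ?_, ?_⟩
  · by_contra! h
    exact hv.2 (funext fun i => Complex.ext (congrFun h.1 i) (congrFun h.2 i))
  · ext i
    have := congrArg Complex.re (congrFun hAv i)
    simpa [Matrix.mulVec, dotProduct] using this
  · ext i
    have := congrArg Complex.im (congrFun hAv i)
    simp [Matrix.mulVec, dotProduct] at this ⊢
    linarith

/-- Lyapunov's theorem: a positive definite solution `P` of `P A + Aᵀ P = -W` with `W` positive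
definite forces `A` to be Hurwitz. -/
lemma isHurwitz_of_lyapunov {ι : Type*} [Fintype ι] [DecidableEq ι]
    {A P W : Matrix ι ι ℝ} (hP : P.PosDef) (hW : W.PosDef)
    (h : P * A + Aᵀ * P = -W) : IsHurwitz A := by
  intro z hz
  obtain ⟨x, y, hxy, hx, hy⟩ := exists_re_im_of_mem_spectrum hz
  have hPT : Pᵀ = P := by simpa using hP.isHermitian.eq
  have sym : ∀ u v : ι → ℝ, u ⬝ᵥ P *ᵥ v = v ⬝ᵥ P *ᵥ u := fun u v => by
    rw [dotProduct_mulVec, ← mulVec_transpose, hPT, dotProduct_comm]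
  have key : ∀ u : ι → ℝ, 2 * (u ⬝ᵥ P *ᵥ (A *ᵥ u)) = -(u ⬝ᵥ W *ᵥ u) := fun u => by
    have h1 := congrArg (fun M : Matrix ι ι ℝ => u ⬝ᵥ M *ᵥ u) h
    have h2 : u ⬝ᵥ (Aᵀ * P) *ᵥ u = u ⬝ᵥ P *ᵥ (A *ᵥ u) := by
      rw [← mulVec_mulVec, dotProduct_mulVec, vecMul_transpose, sym]
    simp only [add_mulVec, dotProduct_add, neg_mulVec, dotProduct_neg, h2] at h1
    rw [← mulVec_mulVec] at h1
    linarith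
  have kx := key x
  have ky := key y
  rw [hx] at kx
  rw [hy] at ky
  simp only [mulVec_add, mulVec_sub, mulVec_smul, dotProduct_add, dotProduct_sub,
    dotProduct_smul, smul_eq_mul] at kx ky
  rw [sym y x] at ky
  -- the off-diagonal terms `± Im z · xᵀ P y` cancel in the sum
  have e : 2 * z.re * (x ⬝ᵥ P *ᵥ x + y ⬝ᵥ P *ᵥ y) = -(x ⬝ᵥ W *ᵥ x + y ⬝ᵥ W *ᵥ y) := by
    linarith
  have pos : ∀ {M : Matrix ι ι ℝ}, M.PosDef → 0 < x ⬝ᵥ M *ᵥ x + y ⬝ᵥ M *ᵥ y := by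
    intro M hM
    have nx : 0 ≤ x ⬝ᵥ M *ᵥ x := by simpa using hM.posSemidef.dotProduct_mulVec_nonneg x
    have ny : 0 ≤ y ⬝ᵥ M *ᵥ y := by simpa using hM.posSemidef.dotProduct_mulVec_nonneg y
    rcases hxy with h0 | h0
    · have : 0 < x ⬝ᵥ M *ᵥ x := by simpa using hM.dotProduct_mulVec_pos h0
      linarith
    · have : 0 < y ⬝ᵥ M *ᵥ y := by simpa using hM.dotProduct_mulVec_pos h0
      linarith
  by_contra! hre
  have := mul_nonneg hre (pos hP).le
  linarith [pos hW]

/-- if `Q_c = Q_cᵀ ≻ 0` solves the Riccati equation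
`A_KᵀQ_c + Q_cA_K + 2Q_cR_cQ_c + C_K = 0` with `A_K = A − BK`,
`C_K = −(KᵀC + CᵀK)`, `R_c ≻ 0`, and `L = Q_c⁻¹Kᵀ`, then
`A_c = A − BK − LC` satisfies `Q_cA_c + A_cᵀQ_c = −2Q_cR_cQ_c`, and is
Hurwitz. -/
theorem observer_error_lyapunov {m n : ℕ}
    (A : Matrix (Fin m) (Fin m) ℝ) (B : Matrix (Fin m) (Fin n) ℝ)
    (C K : Matrix (Fin n) (Fin m) ℝ)
    (Rc Qc AK CK Ac : Matrix (Fin m) (Fin m) ℝ)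
    (L : Matrix (Fin m) (Fin n) ℝ)
    (hRc : Rc.PosDef) (hQc : Qc.PosDef)
    (hAK : AK = A - B * K) (hCK : CK = -(Kᵀ * C + Cᵀ * K))
    (hARE : AKᵀ * Qc + Qc * AK + (2 : ℝ) • (Qc * Rc * Qc) + CK = 0)
    (hL : L = Qc⁻¹ * Kᵀ) (hAc : Ac = A - B * K - L * C) :
    Qc * Ac + Acᵀ * Qc = -((2 : ℝ) • (Qc * Rc * Qc)) ∧ IsHurwitz Ac := by
  have hQT : Qcᵀ = Qc := by simpa using hQc.isHermitian.eq
  have hdet : IsUnit Qc.det := (Matrix.isUnit_iff_isUnit_det _).1 hQc.isUnit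
  have hAc' : Qc * Ac = Qc * AK - Kᵀ * C := by
    rw [hAc, ← hAK, hL, Matrix.mul_sub, ← Matrix.mul_assoc, ← Matrix.mul_assoc,
      Matrix.mul_nonsing_inv _ hdet, Matrix.one_mul]
  have hAcT : Acᵀ * Qc = AKᵀ * Qc - Cᵀ * K := by
    simpa [Matrix.transpose_mul, hQT] using congrArg Matrix.transpose hAc'
  have hlyap : Qc * Ac + Acᵀ * Qc = -((2 : ℝ) • (Qc * Rc * Qc)) := by
    rw [hAc', hAcT, eq_neg_iff_add_eq_zero, ← hARE, hCK]
    abel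
  refine ⟨hlyap, isHurwitz_of_lyapunov hQc ?_ hlyap⟩
  have hcongr : (Qcᴴ * Rc * Qc).PosDef :=
    hRc.conjTranspose_mul_mul_same (Matrix.mulVec_injective_of_isUnit hQc.isUnit)
  rw [hQc.isHermitian.eq] at hcongr
  exact hcongr.smul two_pos
end

section
/- Let J, R, Q ∈ M_m(ℝ) with J = −Jᵀ, R = Rᵀ ⪰ 0, Q = Qᵀ ≻ 0, let B ∈ ℝ^{m×n}, and set A = (J − R)Q, C = BᵀQ. Let K ∈ ℝ^{n×m} be such that A − BK is Hurwitz, let R_c = R_cᵀ ≻ 0 and let Q_c = Q_cᵀ ≻ 0 solve the algebraic Riccati equation A_KᵀQ_c + Q_cA_K + 2Q_cR_cQ_c + C_K = 0 with A_K = A − BK, C_K = −(KᵀC + CᵀK). Define L = Q_c⁻¹Kᵀ. Assume moreover that (A, C) is observable and (A − BK − LC, L) is controllable. Then A − LC is Hurwitz. -/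
/-!
By `Qc L = Kᵀ`, the Riccati equation is the Lyapunov equation `MᵀQc + Qc M = -2 Qc Rc Qc` for
`M = A - BK - LC`, so the observer-based controller `(M, L, K)` is strictly passive with storage
`Qc`, while the plant is passive with storage `Q`: `AᵀQ + QA = -2QRQ`, `C = BᵀQ`.

Suppose `(A - LC) e = z e` with `Re z ≥ 0`. As `A - BK` is Hurwitz, `(z - (A - BK)) x = BK e` has
a solution `x`, and `(x, x - e)` is an eigenvector at `z` of the closed loop formed by plant and
controller. The energy balance for the total storage `diag(Q, Qc)` (`lyapunov_eigenvector`)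
forces the controller state `x - e` to vanish, as well as the dissipation `QRQx`. Hence `x = e`,
`Ax = zx`, `LCx = 0`, and, if `e ≠ 0`, `z` is imaginary. Then `Qx` is a left eigenvector of `A` at
`z`, and it is annihilated by `(BK)ᴴ` because `(BK)ᴴQx = KᴴCx = Qc LCx = 0`. So `z` is an
eigenvalue of `A - BK`, contradicting that `A - BK` is Hurwitz.
-/

open Matrix

open scoped ComplexOrder

/-- Energy balance along an eigenvector: the infinitesimal form of `V' = -⟨v, N v⟩` for
`V = ⟨v, W v⟩`. -/
lemma lyapunov_eigenvector {ι : Type*} [Fintype ι] {F W N : Matrix ι ι ℂ}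
    (h : Fᴴ * W + W * F = -N) {z : ℂ} {v : ι → ℂ} (hv : F *ᵥ v = z • v) :
    (2 * z.re : ℂ) * (star v ⬝ᵥ W *ᵥ v) = -(star v ⬝ᵥ N *ᵥ v) := by
  have h1 : star v ⬝ᵥ (Fᴴ * W) *ᵥ v = star z * (star v ⬝ᵥ W *ᵥ v) := by
    rw [← mulVec_mulVec, dotProduct_mulVec, ← star_mulVec, hv, star_smul, smul_dotProduct,
      smul_eq_mul]
  have h2 : star v ⬝ᵥ (W * F) *ᵥ v = z * (star v ⬝ᵥ W *ᵥ v) := by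
    rw [← mulVec_mulVec, hv, mulVec_smul, dotProduct_smul, smul_eq_mul]
  have h3 := congrArg (fun X => star v ⬝ᵥ X *ᵥ v) h
  simp only [add_mulVec, dotProduct_add, h1, h2, neg_mulVec, dotProduct_neg] at h3
  have hz : (2 * z.re : ℂ) = star z + z := by
    apply Complex.ext <;> simp [two_mul]
  rw [← h3, ← add_mul, hz]

lemma posSemidef_map_ofReal {ι : Type*} [Fintype ι] [DecidableEq ι] {P : Matrix ι ι ℝ}
    (h : P.PosSemidef) : (P.map Complex.ofReal).PosSemidef := by
  obtain ⟨S, rfl⟩ : ∃ S : Matrix ι ι ℝ, P = Sᴴ * S := by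
    open scoped MatrixOrder in
    exact CStarAlgebra.nonneg_iff_eq_star_mul_self.mp h.nonneg
  have : (Sᴴ * S).map Complex.ofReal = (S.map Complex.ofReal)ᴴ * S.map Complex.ofReal := by
    rw [← Matrix.conjTranspose_map _ (fun x => by simp)]
    exact Matrix.map_mul (f := Complex.ofRealHom)
  rw [this]
  exact posSemidef_conjTranspose_mul_self _

lemma posDef_map_ofReal_s17 {ι : Type*} [Fintype ι] [DecidableEq ι] {P : Matrix ι ι ℝ}
    (h : P.PosDef) : (P.map Complex.ofReal).PosDef :=
  (posSemidef_map_ofReal h.posSemidef).posDef_iff_isUnit.mpr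
    (h.isUnit.map (Complex.ofRealHom.mapMatrix (m := ι)))

/-- The closed-loop argument over `ℂ`. The plant `(A, B, C)` is passive with storage matrix `Q`
and dissipation `P`; the observer-based controller `(A - BK - LC, L, K)` is passive with storage
matrix `W` and strict dissipation `S`. -/
lemma no_unstable_eigenvector {m n : ℕ}
    {A Q P W S : Matrix (Fin m) (Fin m) ℂ} {B L : Matrix (Fin m) (Fin n) ℂ}
    {C K : Matrix (Fin n) (Fin m) ℂ}
    (hQ : Q.PosDef) (hP : P.PosSemidef) (hW : W.PosDef) (hS : S.PosDef)
    (hAQ : Aᴴ * Q + Q * A = -P) (hC : C = Bᴴ * Q) (hK : Kᴴ = W * L)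
    (hM : (A - B * K - L * C)ᴴ * W + W * (A - B * K - L * C) = -S)
    {z : ℂ} (hz : 0 ≤ z.re) (hU : IsUnit (z • (1 : Matrix (Fin m) (Fin m) ℂ) - (A - B * K)))
    {e : Fin m → ℂ} (he : (A - L * C) *ᵥ e = z • e) : e = 0 := by
  have hCH : Cᴴ = Q * B := by
    rw [hC, conjTranspose_mul, conjTranspose_conjTranspose, hQ.isHermitian.eq]
  have hKL : K = Lᴴ * W := by
    rw [← conjTranspose_conjTranspose K, hK, conjTranspose_mul, hW.isHermitian.eq]
  -- The plant state `x` driven by the observer error `e` along the mode `z`.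
  obtain ⟨x, hx⟩ : ∃ x, (z • (1 : Matrix (Fin m) (Fin m) ℂ) - (A - B * K)) *ᵥ x
      = (B * K) *ᵥ e := (mulVec_surjective_iff_isUnit.mpr hU) _
  simp only [sub_mulVec, smul_mulVec, one_mulVec] at hx he
  set y := x - e with hy
  have hF : fromBlocks A (-(B * K)) (L * C) (A - B * K - L * C) *ᵥ Sum.elim x y
      = z • Sum.elim x y := by
    have e1 : A *ᵥ x + (-(B * K)) *ᵥ y = z • x := by
      rw [hy, neg_mulVec, mulVec_sub, ← sub_eq_zero]
      rw [← sub_eq_zero] at hx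
      rw [← neg_eq_zero, ← hx]; abel
    have e2 : (L * C) *ᵥ x + (A - B * K - L * C) *ᵥ y = z • y := by
      have : z • y = A *ᵥ x + (-(B * K)) *ᵥ y - z • e := by rw [e1, hy, smul_sub]
      rw [this, ← he, hy]
      simp only [mulVec_sub, sub_mulVec, neg_mulVec]
      abel
    rw [fromBlocks_mulVec]
    ext i
    rcases i with i | i
    · simpa using congrFun e1 i
    · simpa using congrFun e2 i
  -- The supply rates `CᴴK` and `KᴴC` cancel in the negative feedback interconnection.
  have hLyap : (fromBlocks A (-(B * K)) (L * C) (A - B * K - L * C))ᴴ * fromBlocks Q 0 0 W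
      + fromBlocks Q 0 0 W * fromBlocks A (-(B * K)) (L * C) (A - B * K - L * C)
      = -fromBlocks P 0 0 S := by
    rw [fromBlocks_conjTranspose, fromBlocks_multiply, fromBlocks_multiply, fromBlocks_add,
      fromBlocks_neg]
    simp only [Matrix.mul_zero, Matrix.zero_mul, add_zero, zero_add, hAQ, hM, neg_zero]
    congr 1
    · rw [conjTranspose_mul, Matrix.mul_assoc, ← hKL, Matrix.mul_neg, ← Matrix.mul_assoc, hCH,
        add_neg_cancel]
    · rw [conjTranspose_neg, conjTranspose_mul, Matrix.neg_mul, Matrix.mul_assoc, ← hC,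
        ← Matrix.mul_assoc, hK, neg_add_cancel]
  have hE := lyapunov_eigenvector hLyap hF
  have hstar : star (Sum.elim x y) = Sum.elim (star x) (star y) := by
    ext i; rcases i with i | i <;> rfl
  simp only [fromBlocks_mulVec, hstar, Sum.elim_comp_inl, Sum.elim_comp_inr, zero_mulVec,
    add_zero, zero_add, sumElim_dotProduct_sumElim] at hE
  have q1 := hQ.posSemidef.dotProduct_mulVec_nonneg x
  have q2 := hW.posSemidef.dotProduct_mulVec_nonneg y
  have q3 := hP.dotProduct_mulVec_nonneg x
  have q4 := hS.posSemidef.dotProduct_mulVec_nonneg y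
  have hz' : (0 : ℂ) ≤ 2 * z.re := by
    exact_mod_cast mul_nonneg (zero_le_two (α := ℝ)) hz
  have hsum : (star x ⬝ᵥ P *ᵥ x) + (star y ⬝ᵥ S *ᵥ y) = 0 :=
    le_antisymm (neg_nonneg.mp (hE ▸ mul_nonneg hz' (add_nonneg q1 q2))) (add_nonneg q3 q4)
  obtain ⟨hPx, hSy⟩ := (add_eq_zero_iff_of_nonneg q3 q4).mp hsum
  have hy0 : y = 0 := by
    by_contra h
    exact (hS.dotProduct_mulVec_pos h).ne' hSy
  have hxe : x = e := sub_eq_zero.mp (hy.symm.trans hy0)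
  subst hxe
  by_contra hx0
  have hzre : z.re = 0 := by
    rw [hsum, hy0] at hE
    have := (hQ.dotProduct_mulVec_pos hx0).ne'
    simpa [this] using hE
  have hAx : A *ᵥ x = z • x := by
    rw [← sub_eq_zero] at hx ⊢
    rw [← neg_eq_zero, ← hx]; abel
  have hLC : (L * C) *ᵥ x = 0 := by rw [hAx] at he; simpa using he
  have hPx' : P *ᵥ x = 0 := (hP.dotProduct_mulVec_zero_iff x).mp hPx
  -- Without dissipation, `Qx` is a left eigenvector of `A` at the imaginary eigenvalue `z`.
  have hAH : Aᴴ *ᵥ (Q *ᵥ x) = star z • (Q *ᵥ x) := by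
    have h := congrArg (· *ᵥ x) hAQ
    simp only [add_mulVec, neg_mulVec, hPx', neg_zero, ← mulVec_mulVec, hAx, mulVec_smul] at h
    have hzs : star z = -z := by
      apply Complex.ext <;> simp [hzre]
    rw [hzs, neg_smul, eq_neg_of_add_eq_zero_left h]
  have hBK : (B * K)ᴴ *ᵥ (Q *ᵥ x) = 0 := by
    rw [mulVec_mulVec, conjTranspose_mul, Matrix.mul_assoc, ← hC, hK, Matrix.mul_assoc,
      ← mulVec_mulVec, hLC, mulVec_zero]
  have hker : (z • (1 : Matrix (Fin m) (Fin m) ℂ) - (A - B * K))ᴴ *ᵥ (Q *ᵥ x) = 0 := by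
    simp only [conjTranspose_sub, conjTranspose_smul, conjTranspose_one, sub_mulVec, smul_mulVec,
      one_mulVec, hAH, hBK, sub_zero, sub_self]
  have hUH : IsUnit (z • (1 : Matrix (Fin m) (Fin m) ℂ) - (A - B * K))ᴴ := hU.star
  have hQx : Q *ᵥ x = 0 :=
    (mulVec_injective_iff_isUnit.mpr hUH) (hker.trans (mulVec_zero _).symm)
  exact hx0 ((mulVec_injective_iff_isUnit.mpr hQ.isUnit) (hQx.trans (mulVec_zero _).symm))

/-- for the port-Hamiltonian plant `A = (J − R)Q`, `C = BᵀQ` with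
`K` such that `A − BK` is Hurwitz, `Q_c ≻ 0` solving the Riccati equation and
`L = Q_c⁻¹Kᵀ`, if `(A, C)` is observable and `(A − BK − LC, L)` is
controllable, then `A − LC` is Hurwitz. -/
theorem observer_gain_isHurwitz {m n : ℕ}
    (J R Q : Matrix (Fin m) (Fin m) ℝ) (B : Matrix (Fin m) (Fin n) ℝ)
    (A : Matrix (Fin m) (Fin m) ℝ) (C K : Matrix (Fin n) (Fin m) ℝ)
    (Rc Qc AK CK : Matrix (Fin m) (Fin m) ℝ) (L : Matrix (Fin m) (Fin n) ℝ)
    (hJ : J = -Jᵀ) (hR : R.PosSemidef) (hQ : Q.PosDef)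
    (hA : A = (J - R) * Q) (hC : C = Bᵀ * Q)
    (hAK : AK = A - B * K) (hCK : CK = -(Kᵀ * C + Cᵀ * K))
    (hHur : IsHurwitz AK)
    (hRc : Rc.PosDef) (hQc : Qc.PosDef)
    (hARE : AKᵀ * Qc + Qc * AK + (2 : ℝ) • (Qc * Rc * Qc) + CK = 0)
    (hL : L = Qc⁻¹ * Kᵀ)
    (hobs : Observable A C) (hctrb : Controllable (A - B * K - L * C) L) :
    IsHurwitz (A - L * C) := by
  intro z hzspec
  by_contra hcon
  have hz : 0 ≤ z.re := not_lt.mp hcon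
  have hmul : ∀ {a b c : ℕ} (X : Matrix (Fin a) (Fin b) ℝ) (Y : Matrix (Fin b) (Fin c) ℝ),
      (X * Y).map Complex.ofReal = X.map Complex.ofReal * Y.map Complex.ofReal :=
    fun X Y => Matrix.map_mul (f := Complex.ofRealHom)
  have hadd : ∀ {a b : ℕ} (X Y : Matrix (Fin a) (Fin b) ℝ),
      (X + Y).map Complex.ofReal = X.map Complex.ofReal + Y.map Complex.ofReal :=
    fun X Y => Matrix.map_add _ (by simp) X Y
  have hsub : ∀ {a b : ℕ} (X Y : Matrix (Fin a) (Fin b) ℝ),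
      (X - Y).map Complex.ofReal = X.map Complex.ofReal - Y.map Complex.ofReal :=
    fun X Y => Matrix.map_sub _ (by simp) X Y
  have hneg : ∀ {a b : ℕ} (X : Matrix (Fin a) (Fin b) ℝ),
      (-X).map Complex.ofReal = -X.map Complex.ofReal := fun X => by ext; simp
  have htr : ∀ {a b : ℕ} (X : Matrix (Fin a) (Fin b) ℝ),
      Xᵀ.map Complex.ofReal = (X.map Complex.ofReal)ᴴ := fun X => by ext; simp
  have hQt : Qᵀ = Q := hQ.isHermitian.eq
  have hRt : Rᵀ = R := hR.isHermitian.eq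
  have hQct : Qcᵀ = Qc := hQc.isHermitian.eq
  have hJt : Jᵀ = -J := by rw [eq_neg_iff_add_eq_zero, ← eq_neg_iff_add_eq_zero.mp hJ, add_comm]
  have hKL : Kᵀ = Qc * L := by
    rw [hL, mul_nonsing_inv_cancel_left _ _ ((isUnit_iff_isUnit_det _).mp hQc.isUnit)]
  have hKL' : K = Lᵀ * Qc := by
    rw [← transpose_transpose K, hKL, transpose_mul, hQct]
  have hP : ((2 : ℝ) • (Q * R * Q)).PosSemidef := by
    have h := hR.conjTranspose_mul_mul_same Q
    rw [hQ.isHermitian.eq] at h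
    exact h.smul zero_le_two
  have hS : ((2 : ℝ) • (Qc * Rc * Qc)).PosDef := by
    have h := hRc.conjTranspose_mul_mul_same (B := Qc)
      (mulVec_injective_iff_isUnit.mpr hQc.isUnit)
    rw [hQc.isHermitian.eq] at h
    exact h.smul zero_lt_two
  have hAQ : Aᵀ * Q + Q * A = -((2 : ℝ) • (Q * R * Q)) := by
    rw [hA, transpose_mul, transpose_sub, hQt, hRt, hJt, two_smul]
    noncomm_ring
  -- Since `Qc L = Kᵀ`, the Riccati equation is a Lyapunov equation for `A - BK - LC`.
  have hM : (A - B * K - L * C)ᵀ * Qc + Qc * (A - B * K - L * C)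
      = -((2 : ℝ) • (Qc * Rc * Qc)) := by
    rw [← hAK, transpose_sub, Matrix.sub_mul, Matrix.mul_sub, transpose_mul, Matrix.mul_assoc Cᵀ,
      ← hKL', ← Matrix.mul_assoc Qc L, ← hKL, ← add_eq_zero_iff_eq_neg, ← hARE, hCK]
    abel
  have hU : IsUnit (z • (1 : Matrix (Fin m) (Fin m) ℂ)
      - (A.map Complex.ofReal - B.map Complex.ofReal * K.map Complex.ofReal)) := by
    by_contra h
    refine hz.not_gt (hHur z ?_)
    rw [spectrum.mem_iff, Algebra.algebraMap_eq_smul_one, hAK, hsub, hmul]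
    exact h
  obtain ⟨e, he0, he⟩ : ∃ e ≠ 0, (A.map Complex.ofReal
      - L.map Complex.ofReal * C.map Complex.ofReal) *ᵥ e = z • e := by
    rw [spectrum.mem_iff, Algebra.algebraMap_eq_smul_one, isUnit_iff_isUnit_det, isUnit_iff_ne_zero,
      not_not, ← exists_mulVec_eq_zero_iff, hsub, hmul] at hzspec
    obtain ⟨e, he0, he⟩ := hzspec
    refine ⟨e, he0, ?_⟩
    rw [sub_mulVec, smul_mulVec, one_mulVec, sub_eq_zero] at he
    exact he.symm
  refine he0 (no_unstable_eigenvector (posDef_map_ofReal_s17 hQ) (posSemidef_map_ofReal hP)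
    (posDef_map_ofReal_s17 hQc) (posDef_map_ofReal_s17 hS) ?_ ?_ ?_ ?_ hz hU he)
  · simpa only [hadd, hmul, htr, hneg] using congrArg (·.map Complex.ofReal) hAQ
  · rw [hC, hmul, htr]
  · rw [← htr, hKL, hmul]
  · simpa only [hadd, hmul, hsub, htr, hneg] using congrArg (·.map Complex.ofReal) hM
end
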